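/- arXiv:2605.11988 — 4 statements merged into one kernel-verified Lean document; each statement's English description precedes it below -/
import Mathlib

section
/- Let G be a finite group, let p be a prime, let x be a p-element of G, and let y ∈ Sub_G(x). If x and y are conjugate in G, then x and y are conjugate in Sub_G(x). -/
/-- `H` is normal in `K`, where `H ≤ K` are subgroups of an ambient group `G`. -/
def NormalIn {G : Type*} [Group G] (H K : Subgroup G) : Prop :=
  H ≤ K ∧ ∀ k ∈ K, ∀ h ∈ H, k * h * k⁻¹ ∈ H

/-- `H` is subnormal in `K`: there is a finite chain `H = H₀ ⊴ H₁ ⊴ ⋯ ⊴ Hₙ = K`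
in which each term is normal in the next. -/
def SubnormalIn {G : Type*} [Group G] (H K : Subgroup G) : Prop :=
  ∃ (n : ℕ) (c : ℕ → Subgroup G), c 0 = H ∧ c n = K ∧ ∀ i < n, NormalIn (c i) (c (i + 1))

/-- Casolo's subnormalizer set `S_G(x) = {g ∈ G : ⟨x⟩ is subnormal in ⟨x, g⟩}`. -/
def subnormalizerSet (G : Type*) [Group G] (x : G) : Set G :=
  {g : G | SubnormalIn (Subgroup.zpowers x) (Subgroup.closure {x, g})}

/-- The subnormalizer subgroup `Sub_G(x) = ⟨S_G(x)⟩`. -/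
def subnormalizer (G : Type*) [Group G] (x : G) : Subgroup G :=
  Subgroup.closure (subnormalizerSet G x)

theorem SubnormalIn.aux_head {G : Type*} [Group G] {A B C : Subgroup G} (h : NormalIn A B)
    (h2 : SubnormalIn B C) : SubnormalIn A C := by
  obtain ⟨n, c, h0, hn, hc⟩ := h2
  refine ⟨n + 1, fun i => Nat.casesOn i A c, rfl, hn, ?_⟩
  rintro (_ | i) hi
  · simpa [h0] using h
  · exact hc i (by omega)

theorem SubnormalIn.aux_refl {G : Type*} [Group G] (A : Subgroup G) : SubnormalIn A A :=
  ⟨0, fun _ => A, rfl, rfl, by simp⟩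

/-- A subgroup of a finite `p`-group `Q` is subnormal in everything `Q` is normal in. -/
theorem SubnormalIn.aux_pgroup {G : Type*} [Group G] [Finite G] {p : ℕ} [Fact p.Prime]
    {Q K : Subgroup G} (hQ : IsPGroup p Q) (hQK : NormalIn Q K) (A : Subgroup G) (hA : A ≤ Q) :
    SubnormalIn A K := by
  induction A using WellFoundedGT.induction with
  | _ A ih =>
  rcases eq_or_lt_of_le hA with rfl | hlt
  · exact SubnormalIn.aux_head hQK (SubnormalIn.aux_refl K)
  · have hnil : Group.IsNilpotent Q := hQ.isNilpotent
    have hnc := Group.normalizerCondition_of_isNilpotent (G := Q)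
    have hne : A.subgroupOf Q < ⊤ := by
      rw [lt_top_iff_ne_top, Ne, Subgroup.subgroupOf_eq_top]
      exact not_le_of_gt hlt
    obtain ⟨b, hb, hbA⟩ := SetLike.exists_of_lt (hnc _ hne)
    have hbn : (b : G) ∈ Subgroup.normalizer (A : Set G) := by
      rw [← Subgroup.subgroupOf_normalizer_eq hA] at hb
      exact hb
    have hle : A ≤ Subgroup.normalizer (A : Set G) ⊓ Q := le_inf Subgroup.le_normalizer hA
    refine SubnormalIn.aux_head (B := Subgroup.normalizer (A : Set G) ⊓ Q) ⟨hle, ?_⟩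
      (ih _ (lt_of_le_of_ne hle ?_) inf_le_right)
    · intro k hk a ha
      exact (Subgroup.mem_normalizer_iff.1 hk.1 a).1 ha
    · intro h
      exact hbA (by
        rw [Subgroup.mem_subgroupOf, h]
        exact ⟨hbn, b.2⟩)

theorem normalizer_le_subnormalizer {G : Type*} [Group G] [Finite G] {p : ℕ} [Fact p.Prime]
    {Q : Subgroup G} (hQ : IsPGroup p Q) {x : G} (hx : x ∈ Q) :
    Subgroup.normalizer (Q : Set G) ≤ subnormalizer G x := by
  intro n hn
  refine Subgroup.subset_closure ?_
  change SubnormalIn _ _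
  have hK : Subgroup.closure {x, n} ≤ Subgroup.normalizer (Q : Set G) := by
    rw [Subgroup.closure_le]
    rintro z (rfl | rfl)
    · exact Subgroup.le_normalizer hx
    · exact hn
  refine SubnormalIn.aux_pgroup (Q := Q ⊓ Subgroup.closure {x, n}) (p := p)
    (hQ.to_le inf_le_left) ⟨inf_le_right, ?_⟩ _ ?_
  · intro k hk a ha
    exact ⟨(Subgroup.mem_normalizer_iff.1 (hK hk) a).1 ha.1,
      mul_mem (mul_mem hk ha.2) (Subgroup.inv_mem _ hk)⟩
  · rw [Subgroup.zpowers_le]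
    exact ⟨hx, Subgroup.subset_closure (by simp)⟩

/-- **Fusion in the subnormalizer.** Let `x` be a `p`-element of a finite group `G` and
let `y ∈ Sub_G(x)`.  If `x` and `y` are conjugate in `G`, then they are conjugate in
`Sub_G(x)`. -/
theorem subnormalizer_fusion {G : Type*} [Group G] [Finite G] (p : ℕ) [Fact p.Prime]
    (x : G) (hx : ∃ k : ℕ, orderOf x = p ^ k) (y : G) (hy : y ∈ subnormalizer G x)
    (hconj : ∃ g : G, g * x * g⁻¹ = y) :
    ∃ s ∈ subnormalizer G x, s * x * s⁻¹ = y := by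
  obtain ⟨k, hk⟩ := hx
  obtain ⟨g, rfl⟩ := hconj
  have hxp : IsPGroup p (Subgroup.zpowers x) :=
    IsPGroup.of_card (n := k) (by rw [Nat.card_zpowers, hk])
  obtain ⟨P, hP⟩ := hxp.exists_le_sylow
  have hxP : x ∈ P := hP (Subgroup.mem_zpowers x)
  have hNH := normalizer_le_subnormalizer P.2 hxP
  have hPH : (P : Subgroup G) ≤ subnormalizer G x := le_trans Subgroup.le_normalizer hNH
  -- move `y` into `P`
  have hyp : IsPGroup p
      (Subgroup.zpowers (⟨g * x * g⁻¹, hy⟩ : subnormalizer G x)) := by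
    refine IsPGroup.of_card (n := k) ?_
    rw [Nat.card_zpowers, ← hk, ← Subgroup.orderOf_coe]
    exact orderOf_injective (MulAut.conj g).toMonoidHom (MulAut.conj g).injective x
  obtain ⟨R, hR⟩ := hyp.exists_le_sylow
  have hyR := hR (Subgroup.mem_zpowers _)
  obtain ⟨h, hh⟩ := MulAction.exists_smul_eq (subnormalizer G x) R (P.subtype hPH)
  have hyP : (h : G) * (g * x * g⁻¹) * (h : G)⁻¹ ∈ P := by
    have h1 : h * ⟨g * x * g⁻¹, hy⟩ * h⁻¹ ∈ h • R :=
      Subgroup.smul_mem_pointwise_smul _ (MulAut.conj h) (R : Subgroup (subnormalizer G x)) hyR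
    rw [hh] at h1
    exact h1
  -- the Sylow subgroup `(h g)⁻¹ P (h g)` contains `x`
  have hxS : x ∈ (((h : G) * g)⁻¹ • P : Sylow p G) := by
    have h1 := Subgroup.smul_mem_pointwise_smul _ (MulAut.conj ((h : G) * g)⁻¹)
      (P : Subgroup G) hyP
    have h2 : MulAut.conj ((h : G) * g)⁻¹ • ((h : G) * (g * x * g⁻¹) * (h : G)⁻¹) = x := by
      rw [MulAut.smul_def, MulAut.conj_apply]; group
    rw [h2] at h1
    exact h1
  have hSH := le_trans Subgroup.le_normalizer
    (normalizer_le_subnormalizer (((h : G) * g)⁻¹ • P : Sylow p G).2 hxS)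
  obtain ⟨t, ht⟩ := MulAction.exists_smul_eq (subnormalizer G x)
    (Sylow.subtype (((h : G) * g)⁻¹ • P) hSH) (P.subtype hPH)
  rw [Sylow.smul_subtype] at ht
  have ht2 := Sylow.subtype_injective ht
  have ht3 : ((t : G) * ((h : G) * g)⁻¹) • P = P := by
    rw [mul_smul]; exact ht2
  have hm := hNH (Sylow.smul_eq_iff_mem_normalizer.1 ht3)
  have h4 : ((h : G) * g)⁻¹ ∈ subnormalizer G x :=
    (Subgroup.mul_mem_cancel_left _ t.2).1 hm
  have h5 : g ∈ subnormalizer G x :=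
    (Subgroup.mul_mem_cancel_left _ h.2).1 (inv_mem_iff.1 h4)
  exact ⟨g, h5, rfl⟩
end

section
/- Let G be a finite group, let p be a prime, let x be a p-element of G, and let m be a natural number. Then x and x^m are conjugate in G if and only if x and x^m are conjugate in Sub_G(x). -/
/-- Let `x` be a `p`-element of a finite group `G` and let `m` be a natural number.
Then `x` and `x ^ m` are conjugate in `G` if and only if `x` and `x ^ m` are conjugate
in `Sub_G(x)`. -/
theorem conj_pow_iff_conj_in_subnormalizer {G : Type*} [Group G] [Finite G] (p : ℕ)
    [Fact p.Prime] (x : G) (hx : ∃ k : ℕ, orderOf x = p ^ k) (m : ℕ) :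
    (∃ g : G, g * x * g⁻¹ = x ^ m) ↔
      (∃ s ∈ subnormalizer G x, s * x * s⁻¹ = x ^ m) := by
  constructor
  · rintro ⟨g, hg⟩
    refine ⟨g, Subgroup.subset_closure ?_, hg⟩
    have hfin : ((Subgroup.zpowers x : Subgroup G) : Set G).Finite := Set.toFinite _
    have hmem : ∀ h ∈ Subgroup.zpowers x, g * h * g⁻¹ ∈ Subgroup.zpowers x := by
      rintro h ⟨k, rfl⟩
      refine ⟨(m : ℤ) * k, ?_⟩
      simp only [zpow_mul, zpow_natCast, ← hg, conj_zpow]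
    have hgn : g ∈ Subgroup.normalizer (Subgroup.zpowers x : Set G) := by
      rw [Subgroup.mem_normalizer_iff]
      intro h
      refine ⟨hmem h, fun hh => ?_⟩
      have himg : (fun y => g * y * g⁻¹) '' (Subgroup.zpowers x : Set G)
          = (Subgroup.zpowers x : Set G) := by
        apply Set.eq_of_subset_of_ncard_le
        · rintro _ ⟨y, hy, rfl⟩
          exact hmem y hy
        · rw [Set.ncard_image_of_injective]
          intro a b hab
          simpa using hab
        · exact hfin
      have hh2 : g * h * g⁻¹ ∈ (Subgroup.zpowers x : Set G) := hh
      rw [← himg] at hh2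
      obtain ⟨y, hy, hyh⟩ := hh2
      have : y = h := by simpa using hyh
      exact this ▸ hy
    have hle : Subgroup.closure {x, g} ≤ Subgroup.normalizer (Subgroup.zpowers x : Set G) := by
      rw [Subgroup.closure_le]
      rintro y (rfl | rfl)
      · exact Subgroup.le_normalizer (Subgroup.mem_zpowers y)
      · exact hgn
    refine ⟨1, fun i => if i = 0 then Subgroup.zpowers x else Subgroup.closure {x, g},
      by simp, by simp, ?_⟩
    intro i hi
    obtain rfl : i = 0 := by omega
    simp only [if_true, zero_add, one_ne_zero, if_false]
    refine ⟨?_, fun k hk h hh => (Subgroup.mem_normalizer_iff.1 (hle hk) h).1 hh⟩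
    rw [Subgroup.zpowers_le]
    exact Subgroup.subset_closure (by simp)
  · rintro ⟨s, _, hs⟩
    exact ⟨s, hs⟩
end

section
/- Let G be a finite group, let p be a prime, and let x be a p-element of G. Then ℚ_G(x) = ℚ_{Sub_G(x)}(x); that is, the subfield of ℂ generated over ℚ by the values χ(x) for χ ranging over the irreducible complex characters of G equals the subfield of ℂ generated over ℚ by the values ψ(x) for ψ ranging over the irreducible complex characters of the subgroup Sub_G(x) (where x is viewed as an element of Sub_G(x)). -/
lemma mem_subnormalizerSet_self {G : Type*} [Group G] (x : G) :
    x ∈ subnormalizerSet G x := by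
  refine ⟨0, fun _ => Subgroup.zpowers x, rfl, ?_, by omega⟩
  show Subgroup.zpowers x = Subgroup.closure {x, x}
  rw [Set.pair_eq_singleton, ← Subgroup.zpowers_eq_closure]

lemma mem_subnormalizer_self {G : Type*} [Group G] (x : G) :
    x ∈ subnormalizer G x :=
  Subgroup.subset_closure (mem_subnormalizerSet_self x)

open CategoryTheory in
/-- The set of irreducible complex characters of `H`. -/
noncomputable def Irr (H : Type) [Group H] : Set (H → ℂ) :=
  {χ | ∃ V : FDRep ℂ H, Simple V ∧ χ = FDRep.character V}


theorem trace_pow_formula {V : Type*} [AddCommGroup V] [Module ℂ V] [FiniteDimensional ℂ V]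
    {N : ℕ} (hN : N ≠ 0) {ζ : ℂ} (hζ : IsPrimitiveRoot ζ N)
    (f : Module.End ℂ V) (hf : f ^ N = 1) :
    ∃ m : ℕ → ℕ, ∀ k : ℕ, LinearMap.trace ℂ V (f ^ k) =
      ∑ j ∈ Finset.range N, (m j : ℂ) * (ζ ^ k) ^ j := by
  have hNC : (N : ℂ) ≠ 0 := by exact_mod_cast hN
  have hζ0 : ζ ≠ 0 := hζ.ne_zero hN
  let g : ℕ → Module.End ℂ V := fun j => ((ζ ^ j)⁻¹) • f
  have hgN : ∀ j, g j ^ N = 1 := by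
    intro j
    simp only [g, smul_pow, hf]
    rw [inv_pow, ← pow_mul, mul_comm, pow_mul, hζ.pow_eq_one, one_pow, inv_one, one_smul]
  let S : ℕ → Module.End ℂ V := fun j => ∑ i ∈ Finset.range N, g j ^ i
  have hgS : ∀ j, g j * S j = S j := by
    intro j
    have h := mul_geom_sum (g j) N
    rw [hgN, sub_self, sub_mul, one_mul] at h
    exact sub_eq_zero.mp h
  have hgkS : ∀ j k, g j ^ k * S j = S j := by
    intro j k
    induction k with
    | zero => simp
    | succ k ih => rw [pow_succ, mul_assoc, hgS, ih]
  have hSS : ∀ j, S j * S j = (N : ℂ) • S j := by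
    intro j
    calc S j * S j = ∑ i ∈ Finset.range N, g j ^ i * S j := by
          rw [← Finset.sum_mul]
      _ = _ := by
          simp only [hgkS, Finset.sum_const, Finset.card_range]
          rw [Nat.cast_smul_eq_nsmul]
  have hfS : ∀ j k, f ^ k * S j = (ζ ^ k) ^ j • S j := by
    intro j k
    have h := hgkS j k
    simp only [g, smul_pow] at h
    rw [smul_mul_assoc] at h
    rw [← h, smul_smul]
    have : (ζ ^ k) ^ j * (ζ ^ j)⁻¹ ^ k = 1 := by
      rw [inv_pow, ← pow_mul, ← pow_mul, mul_comm j k]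
      exact mul_inv_cancel₀ (pow_ne_zero _ hζ0)
    rw [this, one_smul]
    have h2 : (((ζ ^ j)⁻¹ ^ k) • f ^ k) * S j = S j := by rw [smul_mul_assoc]; exact h
    rw [h]
  have hsum : ∑ j ∈ Finset.range N, S j = (N : ℂ) • (1 : Module.End ℂ V) := by
    simp only [S]
    rw [Finset.sum_comm, Finset.sum_eq_single 0]
    · simp [Nat.cast_smul_eq_nsmul]
    · intro i hi hi0
      have hiN := Finset.mem_range.mp hi
      have : ∀ j, g j ^ i = ((ζ ^ i)⁻¹) ^ j • f ^ i := by
        intro j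
        simp only [g, smul_pow]
        congr 1
        rw [inv_pow, inv_pow, ← pow_mul, ← pow_mul, mul_comm]
      simp only [this, ← Finset.sum_smul]
      have h1 : (ζ ^ i)⁻¹ ≠ 1 := by
        intro h
        exact hζ.pow_ne_one_of_pos_of_lt hi0 hiN (inv_eq_one.mp h)
      have h2 : ∑ j ∈ Finset.range N, ((ζ ^ i)⁻¹) ^ j = 0 := by
        rw [geom_sum_eq h1, inv_pow, ← pow_mul, mul_comm, pow_mul, hζ.pow_eq_one]
        simp
      rw [h2, zero_smul]
    · simp [hN]
  have hidem : ∀ j, IsIdempotentElem ((N : ℂ)⁻¹ • S j) := by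
    intro j
    unfold IsIdempotentElem
    rw [smul_mul_smul_comm, hSS, smul_smul]
    congr 1
    field_simp
  refine ⟨fun j => Module.finrank ℂ (LinearMap.range ((N : ℂ)⁻¹ • S j)), fun k => ?_⟩
  have htr : ∀ j, (Module.finrank ℂ (LinearMap.range ((N : ℂ)⁻¹ • S j)) : ℂ) =
      LinearMap.trace ℂ V ((N : ℂ)⁻¹ • S j) := fun j =>
    ((LinearMap.IsIdempotentElem.isProj_range _ (hidem j)).trace).symm
  have hfk : f ^ k = ∑ j ∈ Finset.range N, (ζ ^ k) ^ j • ((N : ℂ)⁻¹ • S j) := by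
    have h1 : (1 : Module.End ℂ V) = (N : ℂ)⁻¹ • ∑ j ∈ Finset.range N, S j := by
      rw [hsum, smul_smul, inv_mul_cancel₀ hNC, one_smul]
    calc f ^ k = f ^ k * 1 := (mul_one _).symm
      _ = _ := by
        rw [h1, mul_smul_comm, Finset.mul_sum, Finset.smul_sum]
        refine Finset.sum_congr rfl fun j _ => ?_
        rw [hfS, smul_comm]
  simp only [htr]
  conv_lhs => rw [hfk]
  rw [map_sum]
  refine Finset.sum_congr rfl fun j _ => ?_
  rw [map_smul, smul_eq_mul, mul_comm]

theorem irr_of_irreducible (H : Type) [Group H] [Finite H] {V : Type} [AddCommGroup V] [Module ℂ V]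
    [FiniteDimensional ℂ V] (ρ : Representation ℂ H V) [ρ.IsIrreducible] :
    ρ.character ∈ Irr H := by
  classical
  have := Fintype.ofFinite H
  refine ⟨FDRep.of ρ, ?_, rfl⟩
  rw [FDRep.simple_iff_char_is_norm_one]
  have hc : (Nat.card H : ℂ) ≠ 0 := by exact_mod_cast Nat.card_pos.ne'
  have := invertibleOfNonzero hc
  have h := Representation.char_orthonormal ρ ρ
  rw [if_pos ⟨Representation.Equiv.refl ρ⟩] at h
  have h2 := (inv_mul_eq_iff_eq_mul₀ hc).mp h
  rw [mul_one] at h2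
  exact h2

theorem class_sum_zero (H : Type) [Group H] [Fintype H] {V : Type} [AddCommGroup V] [Module ℂ V]
    [FiniteDimensional ℂ V] (ρ : Representation ℂ H V) [ρ.IsIrreducible] (x y : H)
    (hxy : ρ.character x = ρ.character y) :
    ∑ h : H, (ρ (h * x * h⁻¹) - ρ (h * y * h⁻¹)) = 0 := by
  set T : V →ₗ[ℂ] V := ∑ h : H, (ρ (h * x * h⁻¹) - ρ (h * y * h⁻¹)) with hT
  have hcomm : ∀ g : H, T * ρ g = ρ g * T := by
    intro g
    rw [hT, Finset.sum_mul, Finset.mul_sum]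
    refine Fintype.sum_equiv (Equiv.mulLeft g⁻¹) _ _ fun h => ?_
    simp only [sub_mul, mul_sub, ← map_mul, Equiv.coe_mulLeft]
    congr 2 <;> group
  have htr : LinearMap.trace ℂ V T = 0 := by
    rw [hT, map_sum]
    refine Finset.sum_eq_zero fun h _ => ?_
    have h1 := ρ.char_conj x h
    have h2 := ρ.char_conj y h
    unfold Representation.character at h1 h2 hxy
    rw [map_sub, h1, h2, hxy, sub_self]
  let F : Representation.IntertwiningMap ρ ρ := ⟨T, fun g => hcomm g⟩
  obtain ⟨c, hc⟩ :=
    (Representation.IsIrreducible.algebraMap_intertwiningMap_bijective_of_isAlgClosed (ρ := ρ)).2 F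
  have hTc : T = c • LinearMap.id := by
    have := congrArg Representation.IntertwiningMap.toLinearMap hc
    exact this.symm
  have hnt : Nontrivial V := by
    have : Nontrivial ρ.asModule := IsSimpleModule.nontrivial (MonoidAlgebra ℂ H) ρ.asModule
    exact this
  rw [hTc, map_smul, LinearMap.trace_id, smul_eq_mul] at htr
  have hd : (Module.finrank ℂ V : ℂ) ≠ 0 := by
    exact_mod_cast (Module.finrank_pos (R := ℂ) (M := V)).ne'
  rw [hTc, (mul_eq_zero.mp htr).resolve_right hd, zero_smul]

open scoped MonoidAlgebra in
theorem ofModule'_single (H : Type) [Group H] (S : Submodule ℂ[H] ℂ[H]) (g : H) (s : S) :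
    Representation.ofModule' (k := ℂ) (G := H) S g s = (MonoidAlgebra.single g (1 : ℂ)) • s := by
  simp [Representation.ofModule']

open scoped MonoidAlgebra in
theorem irreducible_ofModule' (H : Type) [Group H] (S : Submodule ℂ[H] ℂ[H])
    (hS : IsSimpleModule ℂ[H] S) :
    (Representation.ofModule' (k := ℂ) (G := H) S).IsIrreducible := by
  have hnt : Nontrivial S := IsSimpleModule.nontrivial ℂ[H] S
  have hnt' : Nontrivial (Subrepresentation (Representation.ofModule' (k := ℂ) (G := H) S)) := by
    refine ⟨⊥, ⊤, fun h => ?_⟩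
    have h2 : (⊥ : Submodule ℂ S) = ⊤ := congrArg Subrepresentation.toSubmodule h
    exact bot_ne_top h2
  refine { eq_bot_or_eq_top := fun W => ?_ }
  let W' : Submodule ℂ[H] S :=
    { carrier := W.toSubmodule
      add_mem' := fun ha hb => W.toSubmodule.add_mem ha hb
      zero_mem' := W.toSubmodule.zero_mem
      smul_mem' := by
        intro c m hm
        induction c using MonoidAlgebra.induction_linear with
        | zero => rw [zero_smul]; exact W.toSubmodule.zero_mem
        | add x y hx hy => rw [add_smul]; exact W.toSubmodule.add_mem hx hy
        | single g a =>
          have h1 := W.toSubmodule.smul_mem a (W.apply_mem_toSubmodule g hm)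
          rw [ofModule'_single, ← smul_assoc, MonoidAlgebra.smul_single, smul_eq_mul,
            mul_one] at h1
          exact h1 }
  rcases eq_bot_or_eq_top W' with h | h
  · left
    apply Subrepresentation.toSubmodule_injective
    ext v
    change v ∈ W' ↔ v = 0
    rw [h]; rfl
  · right
    apply Subrepresentation.toSubmodule_injective
    ext v
    change v ∈ W' ↔ True
    rw [h]; exact ⟨fun _ => trivial, fun _ => trivial⟩

open scoped MonoidAlgebra in
theorem isConj_of_irr (H : Type) [Group H] [Finite H] (x y : H)
    (hxy : ∀ χ ∈ Irr H, χ x = χ y) : IsConj x y := by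
  classical
  have := Fintype.ofFinite H
  have hNZ : NeZero (Nat.card H : ℂ) := ⟨by exact_mod_cast Nat.card_pos.ne'⟩
  let z : ℂ[H] := ∑ h : H, (MonoidAlgebra.single (h * x * h⁻¹) 1 -
    MonoidAlgebra.single (h * y * h⁻¹) 1)
  have hS : ∀ S : Submodule ℂ[H] ℂ[H], IsSimpleModule ℂ[H] S → ∀ s ∈ S, z * s = 0 := by
    intro S hSs s hs
    have hfin : Module.Finite ℂ S := Module.Finite.trans ℂ[H] S
    have hirr := irreducible_ofModule' H S hSs
    have h := class_sum_zero H (Representation.ofModule' (k := ℂ) (G := H) S) x y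
      (hxy _ (irr_of_irreducible H _))
    have h2 := LinearMap.congr_fun h (⟨s, hs⟩ : S)
    simp only [LinearMap.sum_apply, LinearMap.sub_apply, ofModule'_single, LinearMap.zero_apply] at h2
    have h3 := congrArg S.subtype h2
    simp only [map_sum, map_sub, map_smul, map_zero, Submodule.subtype_apply, smul_eq_mul] at h3
    rw [← h3]
    simp only [z, Finset.sum_mul, sub_mul]
  have hz : z = 0 := by
    have hall : ∀ s : ℂ[H], z * s = 0 := by
      intro s
      have hs : s ∈ sSup {S : Submodule ℂ[H] ℂ[H] | IsSimpleModule ℂ[H] S} := by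
        rw [IsSemisimpleModule.sSup_simples_eq_top]; trivial
      rw [sSup_eq_iSup'] at hs
      induction hs using Submodule.iSup_induction' with
      | mem S s hs => exact hS S.1 S.2 s hs
      | zero => simp
      | add a b _ _ ha hb => rw [mul_add, ha, hb, add_zero]
    simpa using hall 1
  by_contra hcon
  have hcoef := congrArg (fun w : ℂ[H] => w.coeff x) hz
  have h1 : z.coeff x =
      ∑ h : H, ((if h * x * h⁻¹ = x then (1 : ℂ) else 0) - (if h * y * h⁻¹ = x then 1 else 0)) := by
    simp only [z]
    simp [MonoidAlgebra.coeff_sum, Finsupp.single_apply]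
  rw [h1] at hcoef
  have h2 : ∀ h : H, ¬ (h * y * h⁻¹ = x) := fun h hh => hcon (isConj_iff.mpr ⟨h, hh⟩).symm
  simp only [h2, if_false, sub_zero, Finset.sum_boole] at hcoef
  have h3 : ({h : H | h * x * h⁻¹ = x} : Finset H).card = 0 := by
    have h4 : (((Finset.univ.filter fun h : H => h * x * h⁻¹ = x).card : ℕ) : ℂ) = 0 := hcoef
    exact_mod_cast h4
  rw [Finset.card_eq_zero] at h3
  have : (1 : H) ∈ (Finset.univ.filter fun h : H => h * x * h⁻¹ = x) := by simp
  rw [h3] at this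
  simp at this

theorem irr_pow_formula {H : Type} [Group H] {N : ℕ} (hN : N ≠ 0) {ζ : ℂ}
    (hζ : IsPrimitiveRoot ζ N) {χ : H → ℂ} (hχ : χ ∈ Irr H) (x : H) (hx : x ^ N = 1) :
    ∃ m : ℕ → ℕ, ∀ k : ℕ, χ (x ^ k) = ∑ j ∈ Finset.range N, (m j : ℂ) * (ζ ^ k) ^ j := by
  obtain ⟨V, -, rfl⟩ := hχ
  obtain ⟨m, hm⟩ := trace_pow_formula hN hζ (V.ρ x) (by rw [← map_pow, hx, map_one])
  refine ⟨m, fun k => ?_⟩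
  rw [← hm k, ← map_pow]
  rfl

theorem irr_isConj {H : Type} [Group H] {χ : H → ℂ} (hχ : χ ∈ Irr H) {x y : H}
    (h : IsConj x y) : χ x = χ y := by
  obtain ⟨V, -, rfl⟩ := hχ
  obtain ⟨c, rfl⟩ := isConj_iff.mp h
  exact (V.char_conj x c).symm

theorem adjoin_le_of_conj {A B : Type} [Group A] [Finite A] [Group B] (x : A) (y : B) {N : ℕ}
    (hN : N ≠ 0) (hx : x ^ N = 1) (hy : y ^ N = 1)
    (hconj : ∀ t : ℕ, t.Coprime N → IsConj x (x ^ t) → IsConj y (y ^ t)) :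
    IntermediateField.adjoin ℚ {c : ℂ | ∃ χ ∈ Irr B, χ y = c} ≤
      IntermediateField.adjoin ℚ {c : ℂ | ∃ χ ∈ Irr A, χ x = c} := by
  have : NeZero N := ⟨hN⟩
  rw [IntermediateField.adjoin_le_iff]
  rintro c ⟨ψ, hψ, rfl⟩
  set F := IntermediateField.adjoin ℚ {c : ℂ | ∃ χ ∈ Irr A, χ x = c} with hF
  obtain ⟨ζ, hζ⟩ : ∃ ζ : ℂ, IsPrimitiveRoot ζ N := ⟨_, Complex.isPrimitiveRoot_exp N hN⟩
  let M : IntermediateField F ℂ := IntermediateField.adjoin F {ζ}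
  have hint : IsIntegral F ζ := hζ.isIntegral (Nat.pos_of_ne_zero hN) |>.tower_top
  have hcyc : IsCyclotomicExtension {N} F M := by
    change IsCyclotomicExtension {N} F (IntermediateField.adjoin F {ζ}).toSubalgebra
    rw [IntermediateField.adjoin_simple_toSubalgebra_of_isAlgebraic hint.isAlgebraic]
    exact hζ.adjoin_isCyclotomicExtension F
  have hgal : IsGalois F M := IsCyclotomicExtension.isGalois {N} F M
  have hfd : FiniteDimensional F M := IntermediateField.adjoin.finiteDimensional hint
  let ζM : M := ⟨ζ, IntermediateField.mem_adjoin_simple_self F ζ⟩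
  have hζM : IsPrimitiveRoot ζM N :=
    IsPrimitiveRoot.of_map_of_injective (f := M.val) hζ M.val.injective
  have key : ∀ (m : ℕ → ℕ) (k : ℕ), ∑ j ∈ Finset.range N, (m j : ℂ) * (ζ ^ k) ^ j =
      ((∑ j ∈ Finset.range N, (m j : M) * (ζM ^ k) ^ j : M) : ℂ) := by
    intro m k
    change _ = M.val _
    rw [map_sum]
    refine Finset.sum_congr rfl fun j _ => ?_
    rw [map_mul, map_pow, map_pow, map_natCast]
    rfl
  obtain ⟨m, hm⟩ := irr_pow_formula hN hζ hψ y hy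
  let cM : M := ∑ j ∈ Finset.range N, (m j : M) * (ζM ^ 1) ^ j
  have hcM : (cM : ℂ) = ψ y := by
    rw [← key, ← hm, pow_one]
  have hfix : ∀ σ : Gal(M/F), σ cM = cM := by
    intro σ
    have hσ : IsPrimitiveRoot (σ ζM) N := hζM.map_of_injective σ.injective
    obtain ⟨t, -, htN, ht⟩ := (hζM.isPrimitiveRoot_iff).mp hσ
    have hact : ∀ m : ℕ → ℕ, σ (∑ j ∈ Finset.range N, (m j : M) * (ζM ^ 1) ^ j) =
        ∑ j ∈ Finset.range N, (m j : M) * (ζM ^ t) ^ j := by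
      intro m
      rw [map_sum]
      refine Finset.sum_congr rfl fun j _ => ?_
      rw [map_mul, map_pow, map_pow, map_natCast, ht, pow_one]
    have hxt : IsConj x (x ^ t) := by
      refine isConj_of_irr A x (x ^ t) fun χ hχ => ?_
      obtain ⟨n, hn⟩ := irr_pow_formula hN hζ hχ x hx
      have hmem : χ x ∈ F := IntermediateField.subset_adjoin _ _ ⟨χ, hχ, rfl⟩
      have h1 : algebraMap F M ⟨χ x, hmem⟩ = ∑ j ∈ Finset.range N, (n j : M) * (ζM ^ 1) ^ j := by
        apply Subtype.ext
        rw [← key, ← hn, pow_one]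
        rfl
      have h2 := hact n
      rw [← h1, AlgEquiv.commutes, h1] at h2
      have h3 := congrArg (fun w : M => (w : ℂ)) h2
      rw [← key, ← key, ← hn, ← hn, pow_one] at h3
      exact h3
    have hyt := hconj t htN hxt
    apply Subtype.ext
    rw [hact, ← key, ← hm, hcM]
    exact (irr_isConj hψ hyt).symm
  obtain ⟨d, hd⟩ := (IsGalois.mem_range_algebraMap_iff_fixed cM).mpr hfix
  have : (d : ℂ) = ψ y := by
    rw [← hcM, ← hd]; rfl
  rw [← this]
  exact d.2

theorem mem_subnormalizer_of_conj {G : Type*} [Group G] [Finite G] (x g : G) (t : ℕ)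
    (h : g * x * g⁻¹ = x ^ t) : g ∈ subnormalizer G x := by
  apply Subgroup.subset_closure
  refine ⟨1, fun i => if i = 0 then Subgroup.zpowers x else Subgroup.closure {x, g},
    by simp, by simp, ?_⟩
  intro i hi
  obtain rfl : i = 0 := by omega
  simp only [if_true, zero_add, one_ne_zero, if_false]
  constructor
  · rw [Subgroup.zpowers_le]
    exact Subgroup.subset_closure (by simp)
  · have hle : Subgroup.closure {x, g} ≤ Subgroup.normalizer (Subgroup.zpowers x : Set G) := by
      rw [Subgroup.closure_le]
      rintro a (rfl | rfl)
      · exact Subgroup.le_normalizer (Subgroup.mem_zpowers a)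
      · refine Subgroup.mem_normalizer_fintype ?_
        rintro _ ⟨k, rfl⟩
        refine ⟨t * k, ?_⟩
        simp only
        rw [zpow_mul, zpow_natCast, ← h, conj_zpow]
    intro k hk a ha
    exact (Subgroup.mem_normalizer_iff.mp (hle hk) a).mp ha

/-- Let `x` be a `p`-element of a finite group `G`.  Then `ℚ_G(x) = ℚ_{Sub_G(x)}(x)`:
the subfield of `ℂ` generated over `ℚ` by the values `χ(x)`, `χ ∈ Irr(G)`, equals the
subfield generated over `ℚ` by the values `ψ(x)`, `ψ ∈ Irr(Sub_G(x))`. -/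
theorem field_of_values_eq_subnormalizer (G : Type) [Group G] [Finite G] (p : ℕ)
    [Fact p.Prime] (x : G) (hx : ∃ k : ℕ, orderOf x = p ^ k) :
    IntermediateField.adjoin ℚ {c : ℂ | ∃ χ ∈ Irr G, χ x = c} =
      IntermediateField.adjoin ℚ
        {c : ℂ | ∃ ψ ∈ Irr (subnormalizer G x), ψ ⟨x, mem_subnormalizer_self x⟩ = c} := by
  have hN : orderOf x ≠ 0 := (orderOf_pos x).ne'
  have h1 : x ^ orderOf x = 1 := pow_orderOf_eq_one x
  have h2 : (⟨x, mem_subnormalizer_self x⟩ : subnormalizer G x) ^ orderOf x = 1 :=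
    Subtype.ext h1
  apply le_antisymm
  · refine adjoin_le_of_conj _ _ hN h2 h1 fun t _ h => ?_
    exact (subnormalizer G x).subtype.map_isConj h
  · refine adjoin_le_of_conj _ _ hN h1 h2 fun t _ h => ?_
    obtain ⟨g, hg⟩ := isConj_iff.mp h
    exact isConj_iff.mpr ⟨⟨g, mem_subnormalizer_of_conj x g t hg⟩, Subtype.ext hg⟩
end

section
/- Let q = 2^n ≥ 4, let G = SL₂(F_q) over the field F_q with q elements, let P be a Sylow 2-subgroup of G, and let x ∈ P with x ≠ 1. Then: (1) any two nonidentity elements of P are conjugate in G; (2) there is exactly one irreducible complex character of G vanishing at x, and it has degree q; and (3) every other irreducible complex character of G has odd degree and takes value 1 or −1 at x. -/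
open Matrix
open scoped MatrixGroups

namespace SL2Even

open Representation
open scoped MonoidAlgebra

section General

variable {G : Type} [Group G] [Fintype G]

/-- A representation whose intertwining algebra is one-dimensional is irreducible. -/
theorem irreducible_of_finrank {V : Type} [AddCommGroup V] [Module ℂ V] [FiniteDimensional ℂ V]
    (ρ : Representation ℂ G V) (h : Module.finrank ℂ (IntertwiningMap ρ ρ) = 1) :
    IsIrreducible ρ := by
  rw [irreducible_iff_isSimpleModule_asModule]
  have hsc : ∀ f : Module.End ℂ[G] ρ.asModule, ∃ c : ℂ, ∀ v, f v = c • v := by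
    intro f
    have h1 : (IntertwiningMap.id ρ) ≠ 0 := by
      intro h0
      have : Subsingleton (IntertwiningMap ρ ρ) := by
        refine ⟨fun a b => ?_⟩
        have hz : ∀ a : IntertwiningMap ρ ρ, a = 0 := by
          intro a
          apply DFunLike.ext
          intro v
          have hv : v = 0 := by
            have := DFunLike.congr_fun h0 v
            simpa using this
          rw [hv, map_zero, map_zero]
        rw [hz a, hz b]
      rw [Module.finrank_zero_of_subsingleton] at h
      omega
    obtain ⟨c, hc⟩ := (finrank_eq_one_iff_of_nonzero' _ h1).mp h
      ((IntertwiningMap.equivLinearMapAsModule ρ ρ).symm f)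
    refine ⟨c, fun v => ?_⟩
    have := DFunLike.congr_fun hc v
    exact this.symm
  have hnt : Nontrivial ρ.asModule := by
    by_contra hn
    have hs : Subsingleton ρ.asModule := not_nontrivial_iff_subsingleton.mp hn
    have : Subsingleton (IntertwiningMap ρ ρ) := by
      refine ⟨fun a b => DFunLike.ext _ _ fun v => ?_⟩
      exact hs.elim _ _
    rw [Module.finrank_zero_of_subsingleton] at h
    omega
  rw [isSimpleModule_iff]
  refine { exists_pair_ne := ⟨⊥, ⊤, bot_ne_top⟩, eq_bot_or_eq_top := fun p => ?_ }
  obtain ⟨r, hr⟩ := MonoidAlgebra.Submodule.exists_isCompl (k := ℂ) (G := G) p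
  obtain ⟨c, hc⟩ := hsc (p.subtype ∘ₗ p.projectionOnto r hr)
  by_cases hc0 : c = 0
  · left
    rw [Submodule.eq_bot_iff]
    intro v hv
    have := hc v
    rw [hc0, zero_smul] at this
    rw [LinearMap.comp_apply] at this
    have h2 : p.projectionOnto r hr v = ⟨v, hv⟩ := by
      exact Submodule.projectionOnto_apply_left hr ⟨v, hv⟩
    rw [h2] at this
    exact this
  · right
    rw [Submodule.eq_top_iff']
    intro v
    have h2 : c • v ∈ p := by
      rw [← hc v]
      exact Submodule.coe_mem _
    have h3 := (p.restrictScalars ℂ).smul_mem c⁻¹ h2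
    rw [smul_smul, inv_mul_cancel₀ hc0, one_smul] at h3
    exact h3

theorem card_ne : (Nat.card G : ℂ) ≠ 0 := by
  simp

theorem mem_Irr {χ : G → ℂ} : χ ∈ Irr G ↔
    ∃ (V : Type) (_ : AddCommGroup V) (_ : Module ℂ V) (_ : FiniteDimensional ℂ V)
      (ρ : Representation ℂ G V), IsIrreducible ρ ∧ χ = ρ.character := by
  have := invertibleOfNonzero (card_ne (G := G))
  constructor
  · rintro ⟨V, hV, rfl⟩
    refine ⟨V, inferInstance, inferInstance, inferInstance, V.ρ, ?_, rfl⟩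
    apply irreducible_of_finrank
    have h1 := (FDRep.simple_iff_char_is_norm_one V).mp hV
    have h2 := card_inv_mul_sum_char_mul_char_eq_finrank V.ρ V.ρ
    have h3 : ∑ g : G, Representation.character V.ρ g * Representation.character V.ρ g⁻¹ = Nat.card G := h1
    rw [h3, inv_mul_cancel₀ card_ne] at h2
    exact_mod_cast h2.symm
  · rintro ⟨V, _, _, _, ρ, hρ, rfl⟩
    refine ⟨FDRep.of ρ, ?_, rfl⟩
    rw [FDRep.simple_iff_char_is_norm_one]
    have h2 := card_inv_mul_sum_char_mul_char_eq_finrank ρ ρ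
    rw [IsIrreducible.finrank_intertwiningMap_self, inv_mul_eq_iff_eq_mul₀ card_ne] at h2
    have h3 : ∑ g : G, (FDRep.of ρ).character g * (FDRep.of ρ).character g⁻¹
      = ∑ g : G, ρ.character g * ρ.character g⁻¹ := rfl
    rw [h3, h2]; simp

theorem Irr_conj {χ : G → ℂ} (h : χ ∈ Irr G) (g k : G) : χ (k * g * k⁻¹) = χ g := by
  obtain ⟨V, _, rfl⟩ := h
  simp

theorem Irr_ortho {χ ψ : G → ℂ} (h : χ ∈ Irr G) (h' : ψ ∈ Irr G) (hne : χ ≠ ψ) :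
    ∑ g, χ g * ψ g⁻¹ = 0 := by
  have := invertibleOfNonzero (card_ne (G := G))
  obtain ⟨V, hV, rfl⟩ := h
  obtain ⟨W, hW, rfl⟩ := h'
  have h2 := FDRep.char_orthonormal V W
  rw [if_neg] at h2
  · simpa using h2
  · rintro ⟨i⟩
    exact hne (FDRep.char_iso i)

theorem Irr_norm {χ : G → ℂ} (h : χ ∈ Irr G) :
    ∑ g, χ g * χ g⁻¹ = Nat.card G := by
  obtain ⟨V, hV, rfl⟩ := h
  exact (FDRep.simple_iff_char_is_norm_one V).mp hV

theorem one_mem_Irr : (fun _ : G => (1 : ℂ)) ∈ Irr G := by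
  refine ⟨FDRep.of (Representation.trivial ℂ G ℂ), ?_, ?_⟩
  · rw [FDRep.simple_iff_char_is_norm_one]
    simp [FDRep.character]
  · ext g
    simp [FDRep.character]

theorem class_complete (f : G → ℂ) (hf : ∀ g k, f (k * g * k⁻¹) = f g)
    (ho : ∀ χ ∈ Irr G, ∑ g, f g * χ g⁻¹ = 0) : f = 0 := by
  classical
  let z : ℂ[G] := ∑ g : G, MonoidAlgebra.single g⁻¹ (f g)
  have hz1 : ∀ k : G, MonoidAlgebra.single k (1 : ℂ) * z = z * MonoidAlgebra.single k 1 := by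
    intro k
    simp only [z, Finset.mul_sum, Finset.sum_mul, MonoidAlgebra.single_mul_single, one_mul, mul_one]
    refine Fintype.sum_equiv (MulAut.conj k).toEquiv _ _ fun g => ?_
    have := hf g k
    simp only [MulEquiv.toEquiv_eq_coe, EquivLike.coe_coe, MulAut.conj_apply, this]
    simp [mul_assoc]
  have hz : ∀ a : ℂ[G], a * z = z * a := by
    intro a
    induction a using MonoidAlgebra.induction_linear with
    | zero => simp
    | add x y hx hy => rw [add_mul, mul_add, hx, hy]
    | single g c =>
      have : MonoidAlgebra.single g c = c • MonoidAlgebra.single g (1 : ℂ) := by simp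
      rw [this, smul_mul_assoc, mul_smul_comm, hz1]
  have hfin : FiniteDimensional ℂ ℂ[G] := inferInstance
  have key : ∀ S : Submodule ℂ[G] ℂ[G], IsSimpleModule ℂ[G] S → ∀ s ∈ S, z * s = 0 := by
    intro S hS s hs
    have hfs : FiniteDimensional ℂ S :=
      inferInstanceAs (FiniteDimensional ℂ (S.restrictScalars ℂ))
    let e : Module.End ℂ[G] S :=
      { toFun := fun v => z • v
        map_add' := fun v w => smul_add _ _ _
        map_smul' := fun a v => by
          simp only [RingHom.id_apply, smul_smul, hz] }
    obtain ⟨c, hc⟩ :=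
      (IsSimpleModule.algebraMap_end_bijective_of_isAlgClosed (A := ℂ[G]) (V := S) ℂ).2 e
    let ρ : Representation ℂ G S := Representation.ofModule' S
    have hρ : ∀ g (v : S), ρ g v = MonoidAlgebra.single g (1 : ℂ) • v := by
      intro g v
      simp [ρ, Representation.ofModule']
    have hirr : IsIrreducible ρ := by
      refine { exists_pair_ne := ?_, eq_bot_or_eq_top := ?_ }
      · have : Nontrivial S := IsSimpleModule.nontrivial ℂ[G] S
        obtain ⟨v, hv⟩ := exists_ne (0 : S)
        refine ⟨⊥, ⊤, fun h => hv ?_⟩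
        have : v ∈ (⊤ : Subrepresentation ρ) := trivial
        rw [← h] at this
        exact this
      · intro p
        let U : Submodule ℂ[G] S := 
          { p.toSubmodule with
            smul_mem' := by
              intro a v hv
              induction a using MonoidAlgebra.induction_linear with
              | zero => rw [zero_smul]; exact p.toSubmodule.zero_mem
              | add x y hx hy => rw [add_smul]; exact p.toSubmodule.add_mem hx hy
              | single g c => 
                have : MonoidAlgebra.single g c = c • MonoidAlgebra.single g (1 : ℂ) := by simp
                rw [this, smul_assoc, ← hρ]
                exact p.toSubmodule.smul_mem c (p.apply_mem_toSubmodule g hv) }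
        rcases eq_bot_or_eq_top U with h | h
        · left
          apply Subrepresentation.toSubmodule_injective
          ext v
          exact (SetLike.ext_iff.mp h v)
        · right
          apply Subrepresentation.toSubmodule_injective
          ext v
          exact (SetLike.ext_iff.mp h v)
    have hsum := ho ρ.character (mem_Irr.mpr ⟨S, _, _, hfs, ρ, hirr, rfl⟩)
    have hop : (∑ g, f g • ρ g⁻¹) = c • LinearMap.id := by
      ext1 v
      have h1 : c • v = z • v := LinearMap.congr_fun hc v
      rw [LinearMap.smul_apply, LinearMap.id_apply, h1, LinearMap.sum_apply, Finset.sum_smul]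
      refine Finset.sum_congr rfl fun g _ => ?_
      rw [LinearMap.smul_apply, hρ, ← smul_assoc]
      simp
    have htr := congrArg (LinearMap.trace ℂ S) hop
    rw [map_sum, map_smul, LinearMap.trace_id] at htr
    have : c = 0 := by
      have h4 : ∑ g, (LinearMap.trace ℂ S) (f g • ρ g⁻¹) = 0 := by
        rw [← hsum]
        refine Finset.sum_congr rfl fun g _ => ?_
        rw [map_smul]; rfl
      rw [h4] at htr
      have : Nontrivial S := IsSimpleModule.nontrivial ℂ[G] S
      have h5 : (Module.finrank ℂ S : ℂ) ≠ 0 := by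
        have := Module.finrank_pos (R := ℂ) (M := S)
        exact_mod_cast this.ne'
      have := htr.symm
      rw [smul_eq_mul] at this
      exact (mul_eq_zero.mp this).resolve_right h5
    have h1 : c • (⟨s, hs⟩ : S) = z • ⟨s, hs⟩ := LinearMap.congr_fun hc ⟨s, hs⟩
    rw [this, zero_smul] at h1
    exact (congrArg Subtype.val h1).symm
  have hz0 : z = 0 := by
    let K : Submodule ℂ[G] ℂ[G] :=
      { carrier := {m | z * m = 0}
        add_mem' := fun {a b} ha hb => by
          simp only [Set.mem_ofPred_eq] at *
          rw [mul_add, ha, hb, add_zero]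
        zero_mem' := by simp
        smul_mem' := fun a m hm => by
          simp only [Set.mem_ofPred_eq, smul_eq_mul] at *
          rw [← mul_assoc, ← hz, mul_assoc, hm, mul_zero] }
    have hK : (⊤ : Submodule ℂ[G] ℂ[G]) ≤ K := by
      rw [← IsSemisimpleModule.sSup_simples_eq_top (R := ℂ[G]) (M := ℂ[G])]
      apply sSup_le
      intro S hS s hs
      exact key S hS s hs
    have : (1 : ℂ[G]) ∈ K := hK trivial
    simpa [K] using this
  funext g
  have h1 : z.coeff g⁻¹ = 0 := by rw [hz0]; rfl
  simp only [z] at h1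
  rw [MonoidAlgebra.coeff_sum, Finsupp.finsetSum_apply] at h1
  simpa [MonoidAlgebra.coeff_single, Finsupp.single_apply] using h1

end General

end SL2Even

namespace SL2Even

section Columns

variable {G : Type} [Group G] [Fintype G]

theorem Irr_linearIndependent :
    LinearIndependent ℂ (Subtype.val : Irr G → (G → ℂ)) := by
  classical
  rw [linearIndependent_iff']
  intro s c hc i hi
  have h1 : ∑ g, (∑ j ∈ s, c j • (j : G → ℂ)) g * (i : G → ℂ) g⁻¹ = 0 := by
    rw [hc]; simp
  have h2 : ∑ g, (∑ j ∈ s, c j • (j : G → ℂ)) g * (i : G → ℂ) g⁻¹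
      = ∑ j ∈ s, c j * ∑ g, (j : G → ℂ) g * (i : G → ℂ) g⁻¹ := by
    simp only [Finset.sum_apply, Finset.sum_mul, Finset.mul_sum, Pi.smul_apply, smul_eq_mul]
    rw [Finset.sum_comm]
    refine Finset.sum_congr rfl fun j _ => Finset.sum_congr rfl fun g _ => by ring
  rw [h2, Finset.sum_eq_single i] at h1
  · rw [Irr_norm i.2] at h1
    exact (mul_eq_zero.mp h1).resolve_right card_ne
  · intro j _ hji
    rw [Irr_ortho j.2 i.2 (fun h => hji (Subtype.ext h)), mul_zero]
  · intro h; exact absurd hi h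

theorem Irr_finite : (Irr G).Finite :=
  (Irr_linearIndependent (G := G)).setFinite

open scoped Classical in
theorem column (S : Finset (G → ℂ)) (hS : ∀ χ, χ ∈ S ↔ χ ∈ Irr G) (h g : G) :
    ∑ χ ∈ S, χ h⁻¹ * χ g = ((Finset.univ.filter fun k : G => k * h * k⁻¹ = g).card : ℂ) := by
  let f : G → ℂ := fun g => ((Finset.univ.filter fun k : G => k * h * k⁻¹ = g).card : ℂ)
  have hf : ∀ g k, f (k * g * k⁻¹) = f g := by
    intro g k
    simp only [f]
    congr 1
    refine Finset.card_bij (fun a _ => k⁻¹ * a) ?_ ?_ ?_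
    · intro a ha
      simp only [Finset.mem_filter, Finset.mem_univ, true_and] at ha ⊢
      rw [show k⁻¹ * a * h * (k⁻¹ * a)⁻¹ = k⁻¹ * (a * h * a⁻¹) * k by group, ha]
      group
    · intro a _ b _ hab
      exact mul_left_cancel hab
    · intro b hb
      refine ⟨k * b, ?_, by simp⟩
      simp only [Finset.mem_filter, Finset.mem_univ, true_and] at hb ⊢
      rw [← hb]; group
  have hfχ : ∀ χ ∈ Irr G, ∑ g, f g * χ g⁻¹ = Nat.card G * χ h⁻¹ := by
    intro χ hχ
    have h1 : ∀ g, f g * χ g⁻¹ = ∑ k : G, if k * h * k⁻¹ = g then χ h⁻¹ else 0 := by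
      intro g
      simp only [f]
      rw [Finset.card_filter, Nat.cast_sum, Finset.sum_mul]
      refine Finset.sum_congr rfl fun k _ => ?_
      split_ifs with hk
      · rw [← hk, show (k * h * k⁻¹)⁻¹ = k * h⁻¹ * k⁻¹ by group, Irr_conj hχ]
        simp
      · simp
    simp only [h1]
    rw [Finset.sum_comm]
    simp
  have h0 : f - ∑ χ ∈ S, χ h⁻¹ • χ = 0 := by
    apply class_complete
    · intro g k
      simp only [Pi.sub_apply, Finset.sum_apply, Pi.smul_apply, hf]
      congr 1
      refine Finset.sum_congr rfl fun χ hχ => ?_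
      rw [Irr_conj ((hS χ).mp hχ)]
    · intro ψ hψ
      simp only [Pi.sub_apply, sub_mul, Finset.sum_sub_distrib, hfχ ψ hψ]
      simp only [Finset.sum_apply, Finset.sum_mul, Pi.smul_apply, smul_eq_mul]
      rw [Finset.sum_comm, Finset.sum_eq_single ψ]
      · simp only [mul_assoc]
        rw [← Finset.mul_sum, Irr_norm hψ]
        ring
      · intro χ hχ hne
        simp only [mul_assoc]
        rw [← Finset.mul_sum, Irr_ortho ((hS χ).mp hχ) hψ hne, mul_zero]
      · intro h'; exact absurd ((hS ψ).mpr hψ) h'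
  have h1 := congrFun h0 g
  simp only [Pi.sub_apply, Finset.sum_apply, Pi.smul_apply, smul_eq_mul, Pi.zero_apply] at h1
  exact (sub_eq_zero.mp h1).symm

theorem card_Irr (S : Finset (G → ℂ)) (hS : ∀ χ, χ ∈ S ↔ χ ∈ Irr G) :
    S.card = Nat.card (ConjClasses G) := by
  classical
  have h1 : ∑ g : G, ∑ χ ∈ S, χ g⁻¹ * χ g = S.card * Nat.card G := by
    rw [Finset.sum_comm]
    rw [Finset.sum_congr rfl (g := fun _ => (Nat.card G : ℂ))]
    · simp
    · intro χ hχ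
      rw [← Irr_norm ((hS χ).mp hχ)]
      exact Finset.sum_congr rfl fun g _ => mul_comm _ _
  have h2 : ∑ g : G, ∑ χ ∈ S, χ g⁻¹ * χ g = (Nat.card { p : G × G // Commute p.1 p.2 } : ℂ) := by
    simp only [column S hS]
    rw [Nat.card_eq_fintype_card, Fintype.card_subtype, ← Nat.cast_sum]
    congr 1
    rw [Finset.card_eq_sum_card_fiberwise (f := fun p : G × G => p.1) (t := Finset.univ)
      (fun _ _ => Finset.mem_coe.mpr (Finset.mem_univ _))]
    refine Finset.sum_congr rfl fun g _ => ?_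
    refine Finset.card_bij (fun a _ => (g, a)) ?_ ?_ ?_
    · intro a ha
      simp only [Finset.mem_filter, Finset.mem_univ, true_and] at ha ⊢
      exact ⟨(mul_inv_eq_iff_eq_mul.mp ha).symm, trivial⟩
    · intro a _ b _ hab
      exact (Prod.ext_iff.mp hab).2
    · rintro ⟨b, c⟩ hb
      simp only [Finset.mem_filter, Finset.mem_univ, true_and] at hb
      obtain ⟨hb, rfl⟩ := hb
      refine ⟨c, ?_, rfl⟩
      simp only [Finset.mem_filter, Finset.mem_univ, true_and]
      exact mul_inv_eq_iff_eq_mul.mpr hb.eq.symm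
  rw [h2, card_comm_eq_card_conjClasses_mul_card, Nat.cast_mul] at h1
  have := mul_right_cancel₀ card_ne h1
  exact_mod_cast this.symm

end Columns

end SL2Even

namespace SL2Even

theorem column_one_ne {G : Type} [Group G] [Fintype G] (S : Finset (G → ℂ))
    (hS : ∀ χ, χ ∈ S ↔ χ ∈ Irr G) {g : G} (hg : g ≠ 1) :
    ∑ χ ∈ S, χ 1⁻¹ * χ g = ((0 : ℕ) : ℂ) := by
  classical
  rw [column S hS]
  congr 1
  rw [Finset.card_eq_zero]
  ext k
  simp [Ne.symm hg]

theorem column_one_one {G : Type} [Group G] [Fintype G] (S : Finset (G → ℂ))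
    (hS : ∀ χ, χ ∈ S ↔ χ ∈ Irr G) :
    ∑ χ ∈ S, χ 1⁻¹ * χ 1 = (Fintype.card G : ℂ) := by
  classical
  rw [column S hS, ← Finset.card_univ]
  congr 2
  ext k
  simp

end SL2Even

namespace SL2Even

section Matrices

variable {F : Type} [Field F]

theorem sl_ext {g h : SpecialLinearGroup (Fin 2) F} (h00 : g.1 0 0 = h.1 0 0)
    (h01 : g.1 0 1 = h.1 0 1) (h10 : g.1 1 0 = h.1 1 0) (h11 : g.1 1 1 = h.1 1 1) : g = h := by
  apply Subtype.ext
  rw [Matrix.eta_fin_two g.1, Matrix.eta_fin_two h.1, h00, h01, h10, h11]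

theorem mul_entry (g h : SpecialLinearGroup (Fin 2) F) (i j : Fin 2) :
    (g * h).1 i j = g.1 i 0 * h.1 0 j + g.1 i 1 * h.1 1 j := by
  have h1 : (g * h).1 = g.1 * h.1 := rfl
  rw [h1, Matrix.mul_apply, Fin.sum_univ_two]

theorem one_00 : (1 : SpecialLinearGroup (Fin 2) F).1 0 0 = 1 := rfl
theorem one_01 : (1 : SpecialLinearGroup (Fin 2) F).1 0 1 = 0 := rfl
theorem one_10 : (1 : SpecialLinearGroup (Fin 2) F).1 1 0 = 0 := rfl
theorem one_11 : (1 : SpecialLinearGroup (Fin 2) F).1 1 1 = 1 := rfl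

/-- A matrix of determinant one from its entries. -/
def mk2 (a b c d : F) (h : a * d - b * c = 1) : SpecialLinearGroup (Fin 2) F :=
  ⟨!![a, b; c, d], by rw [Matrix.det_fin_two_of, h]⟩

section
variable (a b c d : F) (h : a * d - b * c = 1)
theorem mk2_00 : (mk2 a b c d h).1 0 0 = a := rfl
theorem mk2_01 : (mk2 a b c d h).1 0 1 = b := rfl
theorem mk2_10 : (mk2 a b c d h).1 1 0 = c := rfl
theorem mk2_11 : (mk2 a b c d h).1 1 1 = d := rfl
end

/-- The companion matrix of `X^2 - t X + 1` in characteristic two. -/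
def comp [CharP F 2] (t : F) : SpecialLinearGroup (Fin 2) F :=
  mk2 0 1 1 t (by
    have : (2 : F) = 0 := CharTwo.two_eq_zero
    linear_combination -this)

/-- The upper unitriangular matrices. -/
def U : Multiplicative F →* SpecialLinearGroup (Fin 2) F where
  toFun b := mk2 1 b.toAdd 0 1 (by ring)
  map_one' := by
    apply sl_ext <;> simp [mk2_00, mk2_01, mk2_10, mk2_11]
  map_mul' x y := by
    apply sl_ext <;> simp [mk2_00, mk2_01, mk2_10, mk2_11, mul_entry, add_comm]

/-- The diagonal torus. -/
def D : Fˣ →* SpecialLinearGroup (Fin 2) F where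
  toFun a := mk2 (a : F) 0 0 ((a⁻¹ : Fˣ) : F) (by simp)
  map_one' := by
    apply sl_ext <;> simp [mk2_00, mk2_01, mk2_10, mk2_11]
  map_mul' x y := by
    apply sl_ext <;> simp [mk2_00, mk2_01, mk2_10, mk2_11, mul_entry, mul_comm]

/-- The Weyl element. -/
def wm [CharP F 2] : SpecialLinearGroup (Fin 2) F :=
  mk2 0 1 1 0 (by
    have : (2 : F) = 0 := CharTwo.two_eq_zero
    linear_combination -this)

section
variable (b : Multiplicative F) (a : Fˣ)
theorem U_00 : (U b).1 0 0 = 1 := rfl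
theorem U_01 : (U b).1 0 1 = b.toAdd := rfl
theorem U_10 : (U b).1 1 0 = 0 := rfl
theorem U_11 : (U b).1 1 1 = 1 := rfl
theorem D_00 : (D a).1 0 0 = a := rfl
theorem D_01 : (D a).1 0 1 = 0 := rfl
theorem D_10 : (D a).1 1 0 = 0 := rfl
theorem D_11 : (D a).1 1 1 = ((a⁻¹ : Fˣ) : F) := rfl
variable [CharP F 2] (t : F)
theorem comp_00 : (comp t).1 0 0 = 0 := rfl
theorem comp_01 : (comp t).1 0 1 = 1 := rfl
theorem comp_10 : (comp t).1 1 0 = 1 := rfl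
theorem comp_11 : (comp t).1 1 1 = t := rfl
theorem wm_00 : (wm : SpecialLinearGroup (Fin 2) F).1 0 0 = 0 := rfl
theorem wm_01 : (wm : SpecialLinearGroup (Fin 2) F).1 0 1 = 1 := rfl
theorem wm_10 : (wm : SpecialLinearGroup (Fin 2) F).1 1 0 = 1 := rfl
theorem wm_11 : (wm : SpecialLinearGroup (Fin 2) F).1 1 1 = 0 := rfl
end

theorem trace_conj_eq (g k : SpecialLinearGroup (Fin 2) F) :
    Matrix.trace (k * g * k⁻¹).1 = Matrix.trace g.1 := by
  have h1 : (k * g * k⁻¹).1 = (k * g).1 * (k⁻¹).1 := rfl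
  rw [h1, Matrix.trace_mul_comm]
  have h2 : (k⁻¹).1 * (k * g).1 = (k⁻¹ * (k * g)).1 := rfl
  rw [h2, inv_mul_cancel_left]

theorem isConj_comp [Finite F] [CharP F 2] (g : SpecialLinearGroup (Fin 2) F) (hg : g ≠ 1) :
    IsConj (comp (Matrix.trace g.1)) g := by
  obtain ⟨a, b, c, d, hd, rfl⟩ : ∃ (a b c d : F) (h : a * d - b * c = 1),
      g = mk2 a b c d h := by
    refine ⟨g.1 0 0, g.1 0 1, g.1 1 0, g.1 1 1, ?_, ?_⟩
    · rw [← Matrix.det_fin_two]; exact g.2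
    · apply sl_ext <;> rfl
  have h2 : (2 : F) = 0 := CharTwo.two_eq_zero
  have hv : ∃ p r : F, c * p ^ 2 + (d - a) * p * r - b * r ^ 2 ≠ 0 := by
    by_cases hc : c = 0
    · by_cases hb : b = 0
      · refine ⟨1, 1, ?_⟩
        intro h
        apply hg
        have had : d = a := by
          rw [hc, hb] at h
          linear_combination h
        have ha : (a - 1) ^ 2 = 0 := by
          rw [hc, had] at hd
          linear_combination hd + (1 - a) * h2
        have ha1 : a = 1 := sub_eq_zero.mp (pow_eq_zero_iff (two_ne_zero) |>.mp ha)
        apply sl_ext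
        · exact ha1
        · exact hb
        · exact hc
        · exact had.trans ha1
      · exact ⟨0, 1, by simpa using hb⟩
    · exact ⟨1, 0, by simpa using hc⟩
  obtain ⟨p, r, hpr⟩ := hv
  obtain ⟨s, hs⟩ := FiniteField.isSquare_of_char_two
    (ringChar.eq F 2 ▸ rfl : ringChar F = 2) (c * p ^ 2 + (d - a) * p * r - b * r ^ 2)⁻¹
  have hs' : s * s * (c * p ^ 2 + (d - a) * p * r - b * r ^ 2) = 1 := by
    rw [← hs, inv_mul_cancel₀ hpr]
  rw [isConj_iff]
  refine ⟨mk2 (s * p) (a * (s * p) + b * (s * r)) (s * r) (c * (s * p) + d * (s * r)) ?_, ?_⟩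
  · linear_combination hs'
  · rw [mul_inv_eq_iff_eq_mul]
    apply sl_ext <;>
      simp only [mk2_00, mk2_01, mk2_10, mk2_11, mul_entry, comp_00, comp_01, comp_10, comp_11, Matrix.trace_fin_two]
    · ring
    · linear_combination (s * p) * hd + (s * p) * h2
    · ring
    · linear_combination (s * r) * hd + (s * r) * h2

theorem comp_ne_one [CharP F 2] (t : F) : comp t ≠ 1 := by
  intro h
  have := congrArg (fun m => m.1 0 1) h
  simp only [comp_01, one_01] at this
  exact one_ne_zero this

theorem isConj_of_trace [Finite F] [CharP F 2] {g h : SpecialLinearGroup (Fin 2) F} (hg : g ≠ 1)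
    (hh : h ≠ 1) (ht : Matrix.trace g.1 = Matrix.trace h.1) : IsConj g h := by
  have h1 := isConj_comp g hg
  have h2 := isConj_comp h hh
  rw [ht] at h1
  exact h1.symm.trans h2

theorem trace_comp [CharP F 2] (t : F) : Matrix.trace (comp t).1 = t := by
  rw [Matrix.trace_fin_two, comp_00, comp_11, zero_add]

theorem trace_eq_of_isConj {g h : SpecialLinearGroup (Fin 2) F} (hc : IsConj g h) :
    Matrix.trace g.1 = Matrix.trace h.1 := by
  obtain ⟨k, rfl⟩ := isConj_iff.mp hc
  exact (trace_conj_eq g k).symm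

theorem card_conjClasses [Fintype F] [CharP F 2] :
    Nat.card (ConjClasses (SpecialLinearGroup (Fin 2) F)) = Fintype.card F + 1 := by
  rw [← Fintype.card_option, ← Nat.card_eq_fintype_card]
  symm
  refine Nat.card_eq_of_bijective (fun o : Option F => o.elim (ConjClasses.mk 1)
    (fun t => ConjClasses.mk (comp t))) ⟨?_, ?_⟩
  · rintro (_ | s) (_ | t) h
    · rfl
    · have h' := ConjClasses.mk_eq_mk_iff_isConj.mp h
      rw [isConj_one_right] at h'
      exact absurd h' (comp_ne_one t)
    · have h' := ConjClasses.mk_eq_mk_iff_isConj.mp h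
      rw [isConj_one_left] at h'
      exact absurd h' (comp_ne_one s)
    · have h' := trace_eq_of_isConj (ConjClasses.mk_eq_mk_iff_isConj.mp h)
      rw [trace_comp, trace_comp] at h'
      rw [h']
  · intro C
    obtain ⟨g, rfl⟩ := ConjClasses.mk_surjective C
    by_cases hg : g = 1
    · exact ⟨none, by rw [hg]; rfl⟩
    · exact ⟨some (Matrix.trace g.1), ConjClasses.mk_eq_mk_iff_isConj.mpr (isConj_comp g hg)⟩

/-- The standard involution. -/
def u : SpecialLinearGroup (Fin 2) F := U (Multiplicative.ofAdd 1)

theorem U_ne_one {b : Multiplicative F} (hb : b ≠ 1) : U b ≠ 1 := by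
  intro h
  apply hb
  have := congrArg (fun m => m.1 0 1) h
  exact this

theorem u_ne_one : (u : SpecialLinearGroup (Fin 2) F) ≠ 1 :=
  U_ne_one (fun h => one_ne_zero (α := F) h)

theorem trace_U [CharP F 2] (b : Multiplicative F) : Matrix.trace (U b).1 = 0 := by
  have h2 : (1 + 1 : F) = 0 := CharTwo.add_self_eq_zero 1
  rw [Matrix.trace_fin_two, U_00, U_11, h2]

theorem isConj_u [Finite F] [CharP F 2] {g : SpecialLinearGroup (Fin 2) F} (hg : g ≠ 1)
    (ht : Matrix.trace g.1 = 0) : IsConj u g :=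
  isConj_of_trace u_ne_one hg (by rw [ht]; exact trace_U _)

theorem u_mul_u [CharP F 2] : (u * u : SpecialLinearGroup (Fin 2) F) = 1 := by
  unfold u
  rw [← map_mul, ← ofAdd_add, CharTwo.add_self_eq_zero]
  exact map_one U

open scoped Classical in
theorem card_centralizer [Fintype F] [CharP F 2] :
    (Finset.univ.filter fun k : SpecialLinearGroup (Fin 2) F => k * u * k⁻¹ = u).card
      = Fintype.card F := by
  symm
  rw [← Finset.card_univ]
  refine Finset.card_bij (fun b _ => U (Multiplicative.ofAdd b)) ?_ ?_ ?_
  · intro b _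
    simp only [Finset.mem_filter, Finset.mem_univ, true_and]
    unfold u
    rw [mul_inv_eq_iff_eq_mul, ← map_mul U, ← map_mul U, mul_comm (Multiplicative.ofAdd b)]
  · intro a _ b _ h
    have := congrArg (fun m => m.1 0 1) h
    exact this
  · intro k hk
    simp only [Finset.mem_filter, Finset.mem_univ, true_and] at hk
    rw [mul_inv_eq_iff_eq_mul] at hk
    have hd := k.2
    rw [Matrix.det_fin_two] at hd
    have h00 := congrArg (fun m => m.1 0 0) hk
    have h01 := congrArg (fun m => m.1 0 1) hk
    simp only [u, mul_entry, U_00, U_01, U_10, U_11, toAdd_ofAdd] at h00 h01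
    have h10 : k.1 1 0 = 0 := by linear_combination -h00
    have h11 : k.1 1 1 = k.1 0 0 := by linear_combination -h01
    have h2 : (2 : F) = 0 := CharTwo.two_eq_zero
    rw [h10, h11] at hd
    have ha : (k.1 0 0 - 1) ^ 2 = 0 := by
      linear_combination hd + (1 - k.1 0 0) * h2
    have ha1 : k.1 0 0 = 1 := sub_eq_zero.mp (pow_eq_zero_iff (two_ne_zero) |>.mp ha)
    rw [ha1] at h11
    refine ⟨k.1 0 1, Finset.mem_univ _, ?_⟩
    apply sl_ext
    · exact ha1.symm
    · rfl
    · exact h10.symm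
    · exact h11.symm

open scoped Classical in
theorem card_trace_zero [Fintype F] [CharP F 2] :
    (Finset.univ.filter fun g : SpecialLinearGroup (Fin 2) F => Matrix.trace g.1 = 0).card
      = Fintype.card F ^ 2 := by
  rw [sq, ← Fintype.card_prod, ← Finset.card_univ]
  have h2 : (2 : F) = 0 := CharTwo.two_eq_zero
  refine Finset.card_bij (fun g _ => (g.1 0 1, g.1 1 0)) (fun _ _ => Finset.mem_univ _) ?_ ?_
  · intro g hg k hk h
    simp only [Finset.mem_filter, Finset.mem_univ, true_and, Matrix.trace_fin_two] at hg hk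
    obtain ⟨h01, h10⟩ := Prod.ext_iff.mp h
    simp only at h01 h10
    have hdg := g.2
    have hdk := k.2
    rw [Matrix.det_fin_two] at hdg hdk
    have ha : (g.1 0 0 - k.1 0 0) ^ 2 = 0 := by
      rw [h01, h10] at hdg
      linear_combination -hdg + hdk + g.1 0 0 * hg - k.1 0 0 * hk
        + (k.1 0 0 ^ 2 - k.1 0 0 * g.1 0 0) * h2
    have ha1 : g.1 0 0 = k.1 0 0 := sub_eq_zero.mp (pow_eq_zero_iff (two_ne_zero) |>.mp ha)
    have hd1 : g.1 1 1 = k.1 1 1 := by linear_combination hg - hk - ha1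
    apply sl_ext
    · exact ha1
    · exact h01
    · exact h10
    · exact hd1
  · rintro ⟨b, c⟩ _
    obtain ⟨s, hs⟩ := FiniteField.isSquare_of_char_two
      (ringChar.eq F 2 ▸ rfl : ringChar F = 2) (1 + b * c)
    refine ⟨mk2 s b c s ?_, ?_, ?_⟩
    · linear_combination -hs
    · simp only [Finset.mem_filter, Finset.mem_univ, true_and]
      rw [Matrix.trace_fin_two, mk2_00, mk2_11, CharTwo.add_self_eq_zero]
    · rfl

open scoped Classical in
theorem card_SL2 [Fintype F] [CharP F 2] :
    Fintype.card (SpecialLinearGroup (Fin 2) F)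
      = (Fintype.card F ^ 2 - 1) * Fintype.card F := by
  have h1 : (Finset.univ.filter fun g : SpecialLinearGroup (Fin 2) F =>
      Matrix.trace g.1 = 0 ∧ g ≠ 1).card = Fintype.card F ^ 2 - 1 := by
    rw [← card_trace_zero (F := F), ← Finset.card_erase_of_mem (a := 1)]
    · congr 1
      ext g
      simp [and_comm]
    · simpa [Matrix.trace_fin_two] using CharTwo.add_self_eq_zero (1 : F)
  rw [← Finset.card_univ, ← h1]
  rw [Finset.card_eq_sum_card_fiberwise
    (f := fun k : SpecialLinearGroup (Fin 2) F => k * u * k⁻¹)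
    (t := Finset.univ.filter fun g : SpecialLinearGroup (Fin 2) F =>
      Matrix.trace g.1 = 0 ∧ g ≠ 1)]
  · rw [Finset.sum_const_nat]
    intro g hg
    simp only [Finset.mem_filter, Finset.mem_univ, true_and] at hg
    rw [← card_centralizer (F := F)]
    obtain ⟨w, hw⟩ := isConj_iff.mp (isConj_u hg.2 hg.1)
    refine Finset.card_bij (fun k _ => w⁻¹ * k) ?_ ?_ ?_
    · intro k hk
      simp only [Finset.mem_filter, Finset.mem_univ, true_and] at hk ⊢
      rw [show w⁻¹ * k * u * (w⁻¹ * k)⁻¹ = w⁻¹ * (k * u * k⁻¹) * w by group, hk, ← hw]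
      group
    · intro k _ k' _ h
      exact mul_left_cancel h
    · intro k hk
      simp only [Finset.mem_filter, Finset.mem_univ, true_and] at hk
      refine ⟨w * k, ?_, by simp⟩
      simp only [Finset.mem_filter, Finset.mem_univ, true_and]
      rw [show w * k * u * (w * k)⁻¹ = w * (k * u * k⁻¹) * w⁻¹ by group, hk, hw]
  · intro k _
    simp only [Finset.coe_filter, Finset.mem_univ, true_and, Set.mem_ofPred_eq]
    refine ⟨?_, ?_⟩
    · rw [trace_conj_eq]; exact trace_U _
    · intro h
      exact u_ne_one (conj_eq_one_iff.mp h)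

theorem D_mul_U (a : Fˣ) (b : Multiplicative F) :
    D a * U b = U (Multiplicative.ofAdd ((a : F) ^ 2 * b.toAdd)) * D a := by
  apply sl_ext <;> simp [D_00, D_01, D_10, D_11, U_00, U_01, U_10, U_11, mul_entry]
  have := a.ne_zero
  field_simp

theorem bruhat [CharP F 2] (g : SpecialLinearGroup (Fin 2) F) :
    (∃ a b, g = D a * U b) ∨ ∃ y a b, g = U y * wm * (D a * U b) := by
  have hd := g.2
  rw [Matrix.det_fin_two] at hd
  by_cases hc : g.1 1 0 = 0
  · left
    have ha : g.1 0 0 ≠ 0 := by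
      intro h; rw [h, hc] at hd; simp at hd
    have h11 : g.1 1 1 = (g.1 0 0)⁻¹ := by
      rw [hc] at hd
      field_simp
      linear_combination hd
    refine ⟨Units.mk0 _ ha, Multiplicative.ofAdd (g.1 0 1 / g.1 0 0), ?_⟩
    apply sl_ext <;> simp [D_00, D_01, D_10, D_11, U_00, U_01, U_10, U_11, mul_entry, hc, h11]
    field_simp
  · right
    refine ⟨Multiplicative.ofAdd (g.1 0 0 / g.1 1 0), Units.mk0 _ hc,
      Multiplicative.ofAdd (g.1 1 1 / g.1 1 0), ?_⟩
    have h2 : (2 : F) = 0 := CharTwo.two_eq_zero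
    apply sl_ext <;> simp [D_00, D_01, D_10, D_11, U_00, U_01, U_10, U_11, wm_00, wm_01, wm_10, wm_11,
      mul_entry] <;>
      field_simp
    linear_combination -hd - h2

theorem comp_eq [CharP F 2] (t : F) : comp t = wm * U (Multiplicative.ofAdd t) := by
  apply sl_ext <;> simp [comp_00, comp_01, comp_10, comp_11, U_00, U_01, U_10, U_11,
    wm_00, wm_01, wm_10, wm_11, mul_entry]

theorem trace_wm [CharP F 2] : Matrix.trace (wm : SpecialLinearGroup (Fin 2) F).1 = 0 := by
  rw [Matrix.trace_fin_two, wm_00, wm_11, zero_add]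

theorem wm_ne_one [CharP F 2] : (wm : SpecialLinearGroup (Fin 2) F) ≠ 1 := by
  intro h
  have := congrArg (fun m => m.1 0 1) h
  exact one_ne_zero (α := F) this

/-- A normal subgroup containing the involution `u` is everything. -/
theorem hom_trivial [Finite F] [CharP F 2] {M : Type} [Monoid M]
    (f : SpecialLinearGroup (Fin 2) F →* M)
    (hu : f u = 1) (g : SpecialLinearGroup (Fin 2) F) : f g = 1 := by
  have hconj : ∀ a b, IsConj a b → f a = 1 → f b = 1 := by
    intro a b hab ha
    obtain ⟨k, rfl⟩ := isConj_iff.mp hab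
    rw [map_mul, map_mul, ha, mul_one, ← map_mul, mul_inv_cancel, map_one]
  by_cases hg : g = 1
  · rw [hg, map_one]
  · apply hconj _ _ (isConj_comp g hg)
    rw [comp_eq, map_mul, hconj _ _ (isConj_u wm_ne_one trace_wm) hu, one_mul]
    by_cases ht : Multiplicative.ofAdd (Matrix.trace g.1) = 1
    · rw [ht, map_one, map_one]
    · exact hconj _ _ (isConj_u (U_ne_one ht) (trace_U _)) hu

theorem trace_of_pow_eq_one [CharP F 2] (g : SpecialLinearGroup (Fin 2) F) (k : ℕ)
    (h : g ^ 2 ^ k = 1) : Matrix.trace g.1 = 0 := by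
  have : Fact (Nat.Prime 2) := ⟨Nat.prime_two⟩
  have : CharP (Matrix (Fin 2) (Fin 2) F) 2 := inferInstance
  have h1 : (g.1 - 1) ^ 2 ^ k = 0 := by
    rw [sub_pow_char_pow_of_commute _ _ (Commute.one_right _)]
    have : g.1 ^ 2 ^ k = 1 := by
      have := congrArg Subtype.val h
      simpa using this
    rw [this, one_pow, sub_self]
  have h2 := Matrix.isNilpotent_trace_of_isNilpotent (⟨_, h1⟩ : IsNilpotent (g.1 - 1))
  rw [isNilpotent_iff_eq_zero, Matrix.trace_sub, Matrix.trace_one] at h2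
  have h3 : ((Fintype.card (Fin 2) : ℕ) : F) = 0 := by simpa using CharTwo.two_eq_zero (R := F)
  rw [h3, sub_zero] at h2
  exact h2

end Matrices

end SL2Even

namespace SL2Even

open Representation

section Reps

variable {F : Type} [Field F] [Fintype F] [CharP F 2]
variable {V : Type} [AddCommGroup V] [Module ℂ V] [FiniteDimensional ℂ V]

/-- The trace of an involution. -/
theorem involution_trace (f : Module.End ℂ V) (hf : f * f = 1) :
    ∃ m : ℕ, LinearMap.trace ℂ V f = Module.finrank ℂ V - 2 * m ∧ (m = 0 → f = 1) := by
  let e : Module.End ℂ V := (2 : ℂ)⁻¹ • (1 - f)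
  have he : IsIdempotentElem e := by
    unfold IsIdempotentElem
    have h1 : (1 - f) * (1 - f) = (2 : ℂ) • (1 - f) := by
      rw [two_smul, mul_sub, sub_mul, sub_mul, hf, one_mul, one_mul, mul_one]
      abel
    rw [smul_mul_smul_comm, h1, smul_smul]
    norm_num [e]
  have hp := (LinearMap.isProj_range_iff_isIdempotentElem e).mpr he
  have ht := hp.trace
  have hfe : f = 1 - (2 : ℂ) • e := by
    simp [e, smul_smul]
  refine ⟨Module.finrank ℂ (LinearMap.range e), ?_, ?_⟩
  · rw [← ht]
    conv_lhs => rw [hfe]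
    rw [map_sub, map_smul, LinearMap.trace_one, smul_eq_mul]
  · intro h0
    rw [Submodule.finrank_eq_zero, LinearMap.range_eq_bot] at h0
    rw [hfe, h0, smul_zero, sub_zero]

/-- Values of a character on the unipotent subgroup. -/
theorem unipotent_sum (ρ : Representation ℂ (SpecialLinearGroup (Fin 2) F) V) :
    (Fintype.card F : ℂ) * Module.finrank ℂ (invariants (ρ.comp U))
      = Module.finrank ℂ V + (Fintype.card F - 1) * ρ.character u := by
  classical
  have hc : (Nat.card (Multiplicative F) : ℂ) ≠ 0 := card_ne
  have := invertibleOfNonzero hc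
  have h := card_inv_mul_sum_char_eq_finrank (G := Multiplicative F) (ρ.comp U)
  rw [inv_mul_eq_iff_eq_mul₀ hc] at h
  have hcard : Nat.card (Multiplicative F) = Fintype.card F := by
    rw [Nat.card_congr Multiplicative.toAdd, Nat.card_eq_fintype_card]
  rw [hcard] at h
  rw [← h, ← Finset.add_sum_erase _ _ (Finset.mem_univ (1 : Multiplicative F))]
  congr 1
  · simp
  · rw [Finset.sum_congr rfl (g := fun _ => ρ.character u), Finset.sum_const,
      Finset.card_erase_of_mem (Finset.mem_univ _), Finset.card_univ, nsmul_eq_mul,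
      Nat.cast_sub Fintype.card_pos, Nat.cast_one]
    · rw [Fintype.card_congr (Multiplicative.toAdd (α := F))]
    · intro b hb
      have hb1 : b ≠ 1 := Finset.ne_of_mem_erase hb
      obtain ⟨k, hk⟩ := isConj_iff.mp (isConj_u (U_ne_one hb1) (trace_U b))
      have : (Representation.character (MonoidHom.comp ρ U) : Multiplicative F → ℂ) b
        = ρ.character (U b) := rfl
      rw [this, ← hk, char_conj]

/-- A vector fixed by the unipotent subgroup bounds the dimension. -/
theorem finrank_le (ρ : Representation ℂ (SpecialLinearGroup (Fin 2) F) V)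
    (hρ : IsIrreducible ρ) (hl : 0 < Module.finrank ℂ (invariants (ρ.comp U))) :
    Module.finrank ℂ V ≤ Fintype.card F + 1 := by
  classical
  set W := invariants (MonoidHom.comp ρ U) with hW
  have memW : ∀ v, v ∈ W ↔ ∀ b, ρ (U b) v = v := fun v => Iff.rfl
  have hstab : ∀ a : Fˣ, ∀ v ∈ W, ρ (D a) v ∈ W := by
    intro a v hv
    rw [memW] at hv ⊢
    intro b
    have h1 : U b * D a = D a * U (Multiplicative.ofAdd (((a⁻¹ : Fˣ) : F) ^ 2 * b.toAdd)) := by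
      rw [D_mul_U]
      congr 2
      have := a.ne_zero
      apply Multiplicative.toAdd.injective
      simp only [toAdd_ofAdd, Units.val_inv_eq_inv_val]
      field_simp
    rw [← Module.End.mul_apply, ← map_mul, h1, map_mul, Module.End.mul_apply, hv]
  obtain ⟨z, hz⟩ := IsCyclic.exists_generator (α := Fˣ)
  have : Nontrivial W := Module.finrank_pos_iff.mp hl
  obtain ⟨c, hc⟩ := Module.End.exists_eigenvalue ((ρ (D z)).restrict (hstab z))
  obtain ⟨w, hw⟩ := hc.exists_hasEigenvector
  have hwe := hw.apply_eq_smul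
  obtain ⟨v, hvW⟩ := w
  have hv0 : v ≠ 0 := fun h => hw.2 (Subtype.ext h)
  have hvz : ρ (D z) v = c • v := congrArg Subtype.val hwe
  have hvU := (memW v).mp hvW
  have hvD : ∀ a : Fˣ, ∃ s : ℂ, ρ (D a) v = s • v := by
    intro a
    obtain ⟨n, hn⟩ := (mem_powers_iff_mem_zpowers (x := z)).mpr (hz a)
    refine ⟨c ^ n, ?_⟩
    simp only at hn
    rw [← hn]
    clear hn
    induction n with
    | zero => simp
    | succ n ih =>
      rw [pow_succ, map_mul, map_mul, Module.End.mul_apply, hvz, map_smul, ih, smul_smul,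
        pow_succ, mul_comm]
  let fam : Option F → V := fun o => o.elim v (fun y => ρ (U (Multiplicative.ofAdd y) * wm) v)
  have hB : ∀ a b, ∃ s : ℂ, ρ (D a * U b) v = s • v := by
    intro a b
    rw [map_mul, Module.End.mul_apply, hvU]
    exact hvD a
  have horb : ∀ g, ρ g v ∈ Submodule.span ℂ (Set.range fam) := by
    intro g
    rcases bruhat g with ⟨a, b, rfl⟩ | ⟨y, a, b, rfl⟩
    · obtain ⟨s, hs⟩ := hB a b
      rw [hs]
      exact Submodule.smul_mem _ _ (Submodule.subset_span ⟨none, rfl⟩)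
    · obtain ⟨s, hs⟩ := hB a b
      rw [map_mul ρ (U y * wm), Module.End.mul_apply, hs, map_smul]
      exact Submodule.smul_mem _ _ (Submodule.subset_span ⟨some y.toAdd, rfl⟩)
  let T : Subrepresentation ρ := ⟨Submodule.span ℂ (Set.range fun g => ρ g v), by
    intro g x hx
    induction hx using Submodule.span_induction with
    | mem x hx =>
      obtain ⟨k, rfl⟩ := hx
      apply Submodule.subset_span
      refine ⟨g * k, ?_⟩
      simp only [map_mul, Module.End.mul_apply]
    | zero => rw [map_zero]; exact Submodule.zero_mem _
    | add x y _ _ hx hy => rw [map_add]; exact Submodule.add_mem _ hx hy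
    | smul s x _ hx => rw [map_smul]; exact Submodule.smul_mem _ _ hx⟩
  have hvT : v ∈ T.toSubmodule := Submodule.subset_span ⟨1, by simp⟩
  have hT : T = ⊤ := by
    rcases hρ.eq_bot_or_eq_top T with h | h
    · rw [h] at hvT
      exact absurd ((Submodule.mem_bot ℂ).mp hvT) hv0
    · exact h
  have hspan : (⊤ : Submodule ℂ V) ≤ Submodule.span ℂ (Set.range fam) := by
    have h1 : T.toSubmodule = ⊤ := by rw [hT]; rfl
    rw [← h1]
    exact Submodule.span_le.mpr (by rintro _ ⟨g, rfl⟩; exact horb g)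
  have h2 : Submodule.span ℂ (Set.range fam) = ⊤ := top_le_iff.mp hspan
  have h3 := finrank_range_le_card (R := ℂ) fam
  rw [Set.finrank, h2, finrank_top, Fintype.card_option] at h3
  exact h3

theorem Irr_data {χ : SpecialLinearGroup (Fin 2) F → ℂ}
    (hχ : χ ∈ Irr (SpecialLinearGroup (Fin 2) F)) :
    ∃ a b : ℤ, χ u = a ∧ χ 1 = a + Fintype.card F * b ∧ 0 ≤ b ∧ (b = 0 → χ = fun _ => 1) ∧
      0 ≤ a + b ∧ (0 < a + b → a + Fintype.card F * b ≤ Fintype.card F + 1) := by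
  classical
  have hn := Irr_norm hχ
  obtain ⟨V, _, _, _, ρ, hρ, rfl⟩ := mem_Irr.mp hχ
  have hcu : ρ.character u = LinearMap.trace ℂ V (ρ u) := rfl
  obtain ⟨m, hm, hm0⟩ := involution_trace (ρ u) (by rw [← map_mul, u_mul_u, map_one])
  have hl := unipotent_sum ρ
  set l := Module.finrank ℂ (invariants (MonoidHom.comp ρ U)) with hl'
  set d := Module.finrank ℂ V with hd
  rw [hcu, hm] at hl
  have hq : 0 < Fintype.card F := Fintype.card_pos
  have hli : (Fintype.card F : ℤ) * l = d + (Fintype.card F - 1) * (d - 2 * m) := by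
    exact_mod_cast hl
  have hqb : (Fintype.card F : ℤ) * (l - (d - 2 * m)) = 2 * m := by linear_combination hli
  refine ⟨d - 2 * m, l - (d - 2 * m), ?_, ?_, ?_, ?_, ?_, ?_⟩
  · rw [hcu, hm]; push_cast; rfl
  · rw [char_one]
    have : (Fintype.card F : ℂ) * (l - (d - 2 * m)) = 2 * m := by exact_mod_cast hqb
    push_cast
    linear_combination -this
  · by_contra hneg
    push Not at hneg
    have : (Fintype.card F : ℤ) * (l - (d - 2 * m)) < 0 :=
      mul_neg_of_pos_of_neg (by exact_mod_cast hq) hneg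
    omega
  · intro hb
    rw [hb, mul_zero] at hqb
    have hu1 := hm0 (by omega)
    have hg : ∀ g, ρ g = 1 := hom_trivial ρ hu1
    have hχd : ∀ g, ρ.character g = d := by
      intro g
      have : ρ.character g = LinearMap.trace ℂ V (ρ g) := rfl
      rw [this, hg, LinearMap.trace_one]
    have hd1 : (d : ℂ) * d = 1 := by
      simp only [hχd, Finset.sum_const, Finset.card_univ, nsmul_eq_mul] at hn
      rw [Nat.card_eq_fintype_card] at hn
      have hc : (Fintype.card (SpecialLinearGroup (Fin 2) F) : ℂ) ≠ 0 := by simp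
      exact mul_left_cancel₀ hc (by rw [hn, mul_one])
    have hd2 : d * d = 1 := by exact_mod_cast hd1
    have hd3 : d = 1 := Nat.eq_one_of_mul_eq_one_right hd2
    funext g
    rw [hχd, hd3, Nat.cast_one]
  · have : (0 : ℤ) ≤ l := Int.natCast_nonneg l
    linarith
  · intro hpos
    have hl0 : 0 < l := by
      have : (0 : ℤ) < l := by linarith
      exact_mod_cast this
    have h1 := finrank_le ρ hρ hl0
    rw [hqb]
    have : (d : ℤ) ≤ Fintype.card F + 1 := by exact_mod_cast h1
    linarith

end Reps

end SL2Even

namespace SL2Even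

/-- The counting argument that determines all the numerical data. -/
theorem counting {ι : Type} [DecidableEq ι] (S : Finset ι) (q : ℤ) (e : ι) (he : e ∈ S) (a b : ι → ℤ)
    (hcard : (S.card : ℤ) = q + 1) (hea : a e = 1) (heb : b e = 0)
    (haa : ∑ i ∈ S, a i ^ 2 = q) (hbb : ∑ i ∈ S, b i ^ 2 = q)
    (hb : ∀ i ∈ S, 0 ≤ b i) (hb0 : ∀ i ∈ S, b i = 0 → i = e)
    (hab : ∀ i ∈ S, 0 ≤ a i + b i) (hdeg : ∀ i ∈ S, 0 < a i + b i → a i + q * b i ≤ q + 1) :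
    ∃ z ∈ S, z ≠ e ∧ a z = 0 ∧ b z = 1 ∧
      ∀ i ∈ S, i ≠ z → (a i = 1 ∨ a i = -1) ∧ (i = e ∨ b i = 1) := by
  have hcT : ((S.erase e).card : ℤ) = q := by
    have := Finset.card_erase_add_one he
    have h2 : ((S.erase e).card : ℤ) + 1 = S.card := by exact_mod_cast this
    linarith
  have hbT : ∑ i ∈ S.erase e, (b i ^ 2 - 1) = 0 := by
    have h1 := Finset.add_sum_erase S (fun i => b i ^ 2) he
    simp only [heb] at h1
    rw [Finset.sum_sub_distrib, Finset.sum_const, nsmul_eq_mul, hcT]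
    linarith
  have hb1 : ∀ i ∈ S.erase e, b i = 1 := by
    have hge : ∀ i ∈ S.erase e, 1 ≤ b i := by
      intro i hi
      have hiS := Finset.mem_of_mem_erase hi
      have h0 := hb i hiS
      have hne : b i ≠ 0 := fun h => Finset.ne_of_mem_erase hi (hb0 i hiS h)
      omega
    have h := (Finset.sum_eq_zero_iff_of_nonneg (fun i hi => by nlinarith [hge i hi])).mp hbT
    intro i hi
    have h1 := h i hi
    have h2 := hge i hi
    nlinarith
  have ha1 : ∀ i ∈ S.erase e, -1 ≤ a i ∧ a i ≤ 1 := by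
    intro i hi
    have hiS := Finset.mem_of_mem_erase hi
    have h1 := hab i hiS
    have h2 := hdeg i hiS
    rw [hb1 i hi] at h1 h2
    refine ⟨by linarith, ?_⟩
    by_cases h : 0 < a i + 1
    · have := h2 h
      linarith
    · linarith
  have haT : ∑ i ∈ S.erase e, (1 - a i ^ 2) = 1 := by
    have h1 := Finset.add_sum_erase S (fun i => a i ^ 2) he
    simp only [hea] at h1
    rw [Finset.sum_sub_distrib, Finset.sum_const, nsmul_eq_mul, hcT]
    linarith
  obtain ⟨z, hz, hz0⟩ : ∃ z ∈ S.erase e, 1 - a z ^ 2 ≠ 0 := by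
    apply Finset.exists_ne_zero_of_sum_ne_zero
    rw [haT]; norm_num
  have hval : ∀ i ∈ S.erase e, a i = -1 ∨ a i = 0 ∨ a i = 1 := by
    intro i hi
    have := ha1 i hi
    omega
  have haz : a z = 0 := by
    rcases hval z hz with h | h | h
    · rw [h] at hz0; norm_num at hz0
    · exact h
    · rw [h] at hz0; norm_num at hz0
  refine ⟨z, Finset.mem_of_mem_erase hz, Finset.ne_of_mem_erase hz, haz, hb1 z hz, ?_⟩
  have hrest : ∑ i ∈ (S.erase e).erase z, (1 - a i ^ 2) = 0 := by
    have h1 := Finset.add_sum_erase (S.erase e) (fun i => 1 - a i ^ 2) hz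
    simp only [haz] at h1
    linarith
  have hr := (Finset.sum_eq_zero_iff_of_nonneg (fun i hi => by
    have := ha1 i (Finset.mem_of_mem_erase hi)
    nlinarith)).mp hrest
  intro i hi hiz
  by_cases hie : i = e
  · exact ⟨Or.inl (by rw [hie, hea]), Or.inl hie⟩
  · have hiT := Finset.mem_erase.mpr ⟨hie, hi⟩
    have h1 := hr i (Finset.mem_erase.mpr ⟨hiz, hiT⟩)
    refine ⟨?_, Or.inr (hb1 i hiT)⟩
    rcases hval i hiT with h | h | h
    · exact Or.inr h
    · rw [h] at h1; norm_num at h1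
    · exact Or.inl h

end SL2Even

/-- Let `q = 2^n ≥ 4`, let `G = SL₂(F_q)`, let `P` be a Sylow `2`-subgroup of `G` and
let `1 ≠ x ∈ P`.  Then (1) any two nonidentity elements of `P` are conjugate in `G`;
(2) there is exactly one irreducible complex character of `G` vanishing at `x`, and it
has degree `q`; (3) every other irreducible complex character of `G` has odd degree and
takes the value `1` or `-1` at `x`. -/
theorem sl2_even_characters (n q : ℕ) (hq : q = 2 ^ n) (hq4 : 4 ≤ q)
    (F : Type) [Field F] [Fintype F] (hF : Fintype.card F = q)
    (P : Sylow 2 (SpecialLinearGroup (Fin 2) F))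
    (x : SpecialLinearGroup (Fin 2) F) (hx : x ∈ P) (hx1 : x ≠ 1) :
    (∀ a ∈ P, ∀ b ∈ P, a ≠ 1 → b ≠ 1 → IsConj a b) ∧
      ∃ χ₀ ∈ Irr (SpecialLinearGroup (Fin 2) F),
        χ₀ x = 0 ∧ χ₀ 1 = (q : ℂ) ∧
        (∀ χ ∈ Irr (SpecialLinearGroup (Fin 2) F), χ x = 0 → χ = χ₀) ∧
        (∀ χ ∈ Irr (SpecialLinearGroup (Fin 2) F), χ ≠ χ₀ →
          (∃ d : ℕ, Odd d ∧ χ 1 = (d : ℂ)) ∧ (χ x = 1 ∨ χ x = -1)) := by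
  classical
  have hfact : Fact (Nat.Prime 2) := ⟨Nat.prime_two⟩
  have hchar : CharP F 2 := charP_of_card_eq_prime_pow (hF.trans hq)
  have htr : ∀ g ∈ P, Matrix.trace g.1 = 0 := by
    intro g hg
    obtain ⟨k, hk⟩ := P.isPGroup' ⟨g, hg⟩
    exact SL2Even.trace_of_pow_eq_one g k (congrArg Subtype.val hk)
  refine ⟨fun a ha b hb ha1 hb1 =>
    SL2Even.isConj_of_trace ha1 hb1 (by rw [htr a ha, htr b hb]), ?_⟩
  have hxu : ∀ χ ∈ Irr (SpecialLinearGroup (Fin 2) F), χ x = χ SL2Even.u := by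
    intro χ hχ
    obtain ⟨k, hk⟩ := isConj_iff.mp (SL2Even.isConj_u hx1 (htr x hx))
    rw [← hk, SL2Even.Irr_conj hχ]
  let S := (SL2Even.Irr_finite (G := SpecialLinearGroup (Fin 2) F)).toFinset
  have hS : ∀ χ, χ ∈ S ↔ χ ∈ Irr (SpecialLinearGroup (Fin 2) F) := fun χ => by simp [S]
  have hdata : ∀ χ : SpecialLinearGroup (Fin 2) F → ℂ, ∃ a b : ℤ, χ ∈ S →
      χ SL2Even.u = a ∧ χ 1 = a + Fintype.card F * b ∧ 0 ≤ b ∧ (b = 0 → χ = fun _ => 1) ∧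
      0 ≤ a + b ∧ (0 < a + b → a + Fintype.card F * b ≤ Fintype.card F + 1) := by
    intro χ
    by_cases h : χ ∈ S
    · obtain ⟨a, b, hab⟩ := SL2Even.Irr_data ((hS χ).mp h)
      exact ⟨a, b, fun _ => hab⟩
    · exact ⟨0, 0, fun h' => absurd h' h⟩
  choose a b hab using hdata
  rw [hF] at hab
  have hinv : (SL2Even.u : SpecialLinearGroup (Fin 2) F)⁻¹ = SL2Even.u :=
    inv_eq_of_mul_eq_one_left SL2Even.u_mul_u
  have hq0 : (q : ℤ) ≠ 0 := by
    have : q ≠ 0 := by omega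
    exact_mod_cast this
  -- the three column relations
  have haa : ∑ χ ∈ S, a χ ^ 2 = (q : ℤ) := by
    have h : ∑ χ ∈ S, χ SL2Even.u⁻¹ * χ SL2Even.u = (Fintype.card F : ℂ) := by
      rw [SL2Even.column S hS, ← SL2Even.card_centralizer]
      congr!
    rw [hF, hinv] at h
    rw [Finset.sum_congr rfl (g := fun χ => ((a χ ^ 2 : ℤ) : ℂ))] at h
    · exact_mod_cast h
    · intro χ hχ
      rw [(hab χ hχ).1]; push_cast; ring
  have hab' : ∑ χ ∈ S, (a χ + q * b χ) * a χ = 0 := by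
    have h : ∑ χ ∈ S, χ 1⁻¹ * χ SL2Even.u = ((0 : ℕ) : ℂ) :=
      SL2Even.column_one_ne S hS SL2Even.u_ne_one
    rw [inv_one] at h
    rw [Finset.sum_congr rfl (g := fun χ => (((a χ + q * b χ) * a χ : ℤ) : ℂ))] at h
    · exact_mod_cast h
    · intro χ hχ
      rw [(hab χ hχ).1, (hab χ hχ).2.1]; push_cast; ring
  have hdd : ∑ χ ∈ S, (a χ + q * b χ) ^ 2 = ((q : ℤ) ^ 2 - 1) * q := by
    have h : ∑ χ ∈ S, χ 1⁻¹ * χ 1 =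
        (Fintype.card (SpecialLinearGroup (Fin 2) F) : ℂ) :=
      SL2Even.column_one_one S hS
    have hc := SL2Even.card_SL2 (F := F)
    rw [← Nat.card_eq_fintype_card] at h hc
    rw [hc, inv_one, hF] at h
    rw [Finset.sum_congr rfl (g := fun χ => (((a χ + q * b χ) ^ 2 : ℤ) : ℂ))] at h
    · have hle : 1 ≤ q ^ 2 := Nat.one_le_pow _ _ (by omega)
      rw [Nat.cast_mul, Nat.cast_sub hle] at h
      push_cast at h
      exact_mod_cast h
    · intro χ hχ
      rw [(hab χ hχ).2.1]; push_cast; ring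
  have hbb : ∑ χ ∈ S, b χ ^ 2 = (q : ℤ) := by
    have h1 : (q : ℤ) ^ 2 * ∑ χ ∈ S, b χ ^ 2 = ∑ χ ∈ S, (a χ + q * b χ) ^ 2
        - 2 * ∑ χ ∈ S, (a χ + q * b χ) * a χ + ∑ χ ∈ S, a χ ^ 2 := by
      rw [Finset.mul_sum, Finset.mul_sum, ← Finset.sum_sub_distrib, ← Finset.sum_add_distrib]
      exact Finset.sum_congr rfl fun χ _ => by ring
    rw [haa, hab', hdd] at h1
    apply mul_left_cancel₀ (pow_ne_zero 2 hq0)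
    rw [h1]; ring
  have he : (fun _ => (1 : ℂ)) ∈ S := (hS _).mpr SL2Even.one_mem_Irr
  obtain ⟨he1, he2, -⟩ := hab _ he
  have hea : a (fun _ => (1 : ℂ)) = 1 := by exact_mod_cast he1.symm
  have heb : b (fun _ => (1 : ℂ)) = 0 := by
    rw [hea] at he2
    have h3 : (q : ℂ) * b (fun _ => (1 : ℂ)) = 0 := by
      push_cast at he2
      linear_combination -he2
    have h4 : (q : ℤ) * b (fun _ => (1 : ℂ)) = 0 := by exact_mod_cast h3
    exact (mul_eq_zero.mp h4).resolve_left hq0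
  obtain ⟨z, hzS, hze, haz, hbz, hrest⟩ := SL2Even.counting S (q : ℤ) (fun _ => (1 : ℂ)) he a b
    (by rw [SL2Even.card_Irr S hS, SL2Even.card_conjClasses, hF]; push_cast; rfl) hea heb haa hbb
    (fun χ hχ => (hab χ hχ).2.2.1) (fun χ hχ => (hab χ hχ).2.2.2.1)
    (fun χ hχ => (hab χ hχ).2.2.2.2.1) (fun χ hχ => (hab χ hχ).2.2.2.2.2)
  have heven : Even q := by
    rw [hq]
    refine (even_two).pow_of_ne_zero ?_
    rintro rfl
    norm_num at hq
    omega
  refine ⟨z, (hS z).mp hzS, ?_, ?_, ?_, ?_⟩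
  · rw [hxu z ((hS z).mp hzS), (hab z hzS).1, haz, Int.cast_zero]
  · rw [(hab z hzS).2.1, haz, hbz]; simp
  · intro χ hχ hχ0
    by_contra hne
    have hχS := (hS χ).mpr hχ
    rw [hxu χ hχ, (hab χ hχS).1] at hχ0
    have h0 : a χ = 0 := by exact_mod_cast hχ0
    rcases (hrest χ hχS hne).1 with h | h <;> omega
  · intro χ hχ hne
    have hχS := (hS χ).mpr hχ
    obtain ⟨ha, hb⟩ := hrest χ hχS hne
    have hval : χ x = a χ := by rw [hxu χ hχ, (hab χ hχS).1]
    refine ⟨?_, ?_⟩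
    · rcases hb with hb | hb
      · exact ⟨1, odd_one, by rw [hb]; simp⟩
      · have hd := (hab χ hχS).2.1
        rw [hb] at hd
        rcases ha with h | h
        · refine ⟨q + 1, heven.add_one, ?_⟩
          rw [hd, h]; push_cast; ring
        · refine ⟨q - 1, Nat.Even.sub_odd (by omega) heven odd_one, ?_⟩
          rw [hd, h, Nat.cast_sub (by omega)]; push_cast; ring
    · rw [hval]
      rcases ha with h | h
      · left; rw [h]; simp
      · right; rw [h]; simp
end
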